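/- arXiv:1608.07516 — 2 statements merged into one kernel-verified Lean document; each statement's English description precedes it below -/
import Mathlib

section
/- Let n ≥ 2 and f ∈ C^{2n−1}(a,b). If the Hankel matrix M_n(t,f) = (f^{(i+j−1)}(t)/(i+j−1)!)_{1≤i,j≤n} is positive semi-definite for every t ∈ (a,b), then the Loewner matrix ([λᵢ,λⱼ]_f)_{1≤i,j≤n} is positive semi-definite for every tuple (λ₁,...,λₙ) ∈ (a,b)^n. -/
open Set Matrix

/-!
For distinct nodes `x i` and a real vector `v`, put `q = ∑ i, v i * ∏ k ≠ i, (X - x k)`. The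
quadratic form of the Loewner matrix at `v` is the divided difference of `q ^ 2 * f` at the nodes,
each taken twice: it is the coefficient of order `2 * m + 1` of the Hermite interpolant, which is
assembled from the secant lines of `f`. By Rolle's theorem this divided difference equals
`(q ^ 2 * f)^(2 * m + 1) (t) / (2 * m + 1)!` for some `t`, and expanding `q` around `t` turns the
latter into a value of the quadratic form of the Hankel matrix of `f` at `t`. Repeated nodes only
repeat rows and columns of a Loewner matrix with distinct nodes.
-/

section Rolle

variable {s : Set ℝ} {g : ℝ → ℝ} {m : ℕ} {Z : Finset ℝ}

theorem exists_finset_deriv_eq_zero (hs : s.OrdConnected) (hg : ContinuousOn g s)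
    (hZ : Z.card = m + 1) (hZ0 : ∀ z ∈ Z, z ∈ s ∧ g z = 0) :
    ∃ Z' : Finset ℝ, Z'.card = m ∧ Disjoint Z Z' ∧ ∀ z ∈ Z', z ∈ s ∧ deriv g z = 0 := by
  set e := Z.orderEmbOfFin hZ
  have he (k) : e k ∈ s ∧ g (e k) = 0 := hZ0 _ (Z.orderEmbOfFin_mem hZ k)
  have hsub (i : Fin m) : Icc (e i.castSucc) (e i.succ) ⊆ s := hs.out (he _).1 (he _).1
  have hrolle (i : Fin m) : ∃ c ∈ Ioo (e i.castSucc) (e i.succ), deriv g c = 0 :=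
    exists_deriv_eq_zero (e.strictMono i.castSucc_lt_succ) (hg.mono (hsub i))
      ((he _).2.trans (he _).2.symm)
  choose c hc hc0 using hrolle
  have hmono : StrictMono c := fun i j hij =>
    (hc i).2.trans_le <| (e.monotone (Fin.succ_le_castSucc_iff.2 hij)).trans (hc j).1.le
  have hcZ (i : Fin m) : c i ∉ Z := by
    intro hi
    obtain ⟨k, hk⟩ : c i ∈ range e := by simpa [e] using hi
    have hlt := hc i
    rw [← hk, mem_Ioo, e.lt_iff_lt, e.lt_iff_lt] at hlt
    exact (Fin.castSucc_lt_iff_succ_le.1 hlt.1).not_gt hlt.2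
  refine ⟨Finset.univ.map ⟨c, hmono.injective⟩, by simp, ?_, ?_⟩
  · simpa [Finset.disjoint_right] using hcZ
  · simpa using fun i => ⟨hsub i (Ioo_subset_Icc_self (hc i)), hc0 i⟩

theorem exists_iteratedDeriv_eq_zero (hs : s.OrdConnected)
    (hg : ∀ k < m, ContinuousOn (iteratedDeriv k g) s)
    (hZ : Z.card = m + 1) (hZ0 : ∀ z ∈ Z, z ∈ s ∧ g z = 0) :
    ∃ t ∈ s, iteratedDeriv m g t = 0 := by
  induction m generalizing g Z with
  | zero =>
    obtain ⟨z, hz⟩ : Z.Nonempty := Finset.card_pos.1 (by omega)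
    exact ⟨z, by simpa using hZ0 z hz⟩
  | succ m ih =>
    obtain ⟨Z', hZ', -, hZ0'⟩ :=
      exists_finset_deriv_eq_zero hs (by simpa using hg 0 m.succ_pos) hZ hZ0
    simp only [iteratedDeriv_succ']
    exact ih (fun k hk => by simpa only [iteratedDeriv_succ'] using hg (k + 1) (by omega)) hZ' hZ0'

theorem exists_iteratedDeriv_eq_zero_of_double_zeros (hs : s.OrdConnected)
    (hg : ∀ k ≤ 2 * m, ContinuousOn (iteratedDeriv k g) s) (hZ : Z.card = m + 1)
    (hZ0 : ∀ z ∈ Z, z ∈ s ∧ g z = 0 ∧ deriv g z = 0) :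
    ∃ t ∈ s, iteratedDeriv (2 * m + 1) g t = 0 := by
  obtain ⟨Z', hZ', hdisj, hZ0'⟩ := exists_finset_deriv_eq_zero hs (by simpa using hg 0 (by omega))
    hZ fun z hz => ⟨(hZ0 z hz).1, (hZ0 z hz).2.1⟩
  simp only [iteratedDeriv_succ']
  refine exists_iteratedDeriv_eq_zero hs (Z := Z ∪ Z')
    (fun k hk => by simpa only [iteratedDeriv_succ'] using hg (k + 1) (by omega)) ?_ ?_
  · rw [Finset.card_union_of_disjoint hdisj]
    omega
  · intro z hz
    rcases Finset.mem_union.1 hz with hz | hz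
    · exact ⟨(hZ0 z hz).1, (hZ0 z hz).2.2⟩
    · exact hZ0' z hz

end Rolle

section IteratedDeriv

open Polynomial

variable {𝕜 : Type*} [NontriviallyNormedField 𝕜]

theorem continuousOn_iteratedDeriv_of_isOpen {E : Type*} [NormedAddCommGroup E] [NormedSpace 𝕜 E]
    {s : Set 𝕜} (hso : IsOpen s) {g : 𝕜 → E} {k N : ℕ} (hg : ContDiffOn 𝕜 N g s) (hk : k ≤ N) :
    ContinuousOn (iteratedDeriv k g) s :=
  (hg.continuousOn_iteratedDerivWithin (by exact_mod_cast hk) hso.uniqueDiffOn).congr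
    fun _ ht => (iteratedDerivWithin_of_isOpen hso ht).symm

theorem iteratedDeriv_polynomial_eval (p : 𝕜[X]) (k : ℕ) :
    iteratedDeriv k (fun y => p.eval y) = fun y => (derivative^[k] p).eval y := by
  induction k with
  | zero => simp
  | succ k ih =>
    ext y
    rw [iteratedDeriv_succ, ih, Polynomial.deriv, Function.iterate_succ_apply']

theorem iteratedDeriv_polynomial_eval_of_natDegree_le {p : 𝕜[X]} {k : ℕ} (hp : p.natDegree ≤ k)
    (t : 𝕜) : iteratedDeriv k (fun y => p.eval y) t = k.factorial * p.coeff k := by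
  have hconst : derivative^[k] p = C ((derivative^[k] p).coeff 0) :=
    eq_C_of_natDegree_le_zero ((natDegree_iterate_derivative p k).trans (by omega))
  simp only [iteratedDeriv_polynomial_eval]
  rw [hconst, eval_C, coeff_iterate_derivative, zero_add, Nat.descFactorial_self, nsmul_eq_mul]

theorem contDiff_polynomial_eval (p : 𝕜[X]) {k : WithTop ℕ∞} : ContDiff 𝕜 k fun y => p.eval y := by
  simpa using p.contDiff_aeval (𝕜 := 𝕜) k

theorem iteratedDeriv_sub_pow_mul [CharZero 𝕜] {k N : ℕ} (hk : k ≤ N) {f : 𝕜 → 𝕜} {t : 𝕜}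
    (hf : ContDiffAt 𝕜 N f t) :
    iteratedDeriv N (fun y => (y - t) ^ k * f y) t =
      N.factorial * (iteratedDeriv (N - k) f t / (N - k).factorial) := by
  have hpow (i : ℕ) : iteratedDeriv i (fun y => (y - t) ^ k) t =
      if i = k then (k.factorial : 𝕜) else 0 := by
    rw [congrFun (iteratedDeriv_comp_sub_const i (fun y : 𝕜 => y ^ k) t) t]
    simpa using iteratedDeriv_fun_pow_zero (𝕜 := 𝕜) (n := i) (m := k)
  rw [iteratedDeriv_fun_mul (by fun_prop) hf, Finset.sum_eq_single_of_mem k (by simp; omega)]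
  · have hfac : ((N - k).factorial : 𝕜) ≠ 0 := Nat.cast_ne_zero.2 (N - k).factorial_ne_zero
    rw [hpow, if_pos rfl, ← Nat.choose_mul_factorial_mul_factorial hk]
    push_cast
    field_simp
  · intro i _ hi
    simp only [hpow, if_neg hi, mul_zero, zero_mul]

end IteratedDeriv

section Hankel

open Polynomial

/-- The `n × n` Hankel matrix `M_n(t, f)` of Taylor coefficients of `f` at `t`. Indices start at
`0`, so that the entry `(i, j)` has order `i + j + 1`. -/
noncomputable def hankelMatrix (n : ℕ) (f : ℝ → ℝ) (t : ℝ) : Matrix (Fin n) (Fin n) ℝ :=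
  of fun i j => iteratedDeriv (i + j + 1) f t / ((i + j + 1 : ℕ).factorial : ℝ)

theorem posSemidef_hankelMatrix_of_le {m n : ℕ} (hmn : m ≤ n) {f : ℝ → ℝ} {t : ℝ}
    (h : (hankelMatrix n f t).PosSemidef) : (hankelMatrix m f t).PosSemidef :=
  h.submatrix (Fin.castLE hmn)

/-- The coefficients of `p` in powers of `X - t`, from degree `m` down to degree `0`. In this order
the exponents `m - i` and `m - j` add up to `2 * m + 1` with the order `i + j + 1` of the Hankel
entry `(i, j)`. -/
noncomputable def revTaylorCoeff (m : ℕ) (t : ℝ) (p : ℝ[X]) : Fin (m + 1) → ℝ :=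
  fun i => (taylor t p).coeff i.rev

theorem eval_eq_sum_revTaylorCoeff {m : ℕ} {p : ℝ[X]} (hp : p.natDegree ≤ m) (t y : ℝ) :
    p.eval y = ∑ i : Fin (m + 1), revTaylorCoeff m t p i * (y - t) ^ (i.rev : ℕ) := by
  have hrev := Equiv.sum_comp Fin.revPerm
    fun i : Fin (m + 1) => (taylor t p).coeff i * (y - t) ^ (i : ℕ)
  simp only [Fin.revPerm_apply] at hrev
  simp only [revTaylorCoeff]
  rw [hrev, ← taylor_eval_sub t,
    eval_eq_sum_range' (n := m + 1) (by simpa [Nat.lt_succ_iff] using hp),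
    Finset.sum_range fun i => (taylor t p).coeff i * (y - t) ^ i]

theorem iteratedDeriv_eval_mul_eval_mul {m : ℕ} {f : ℝ → ℝ} {t : ℝ}
    (hf : ContDiffAt ℝ (2 * m + 1 : ℕ) f t) {p q : ℝ[X]} (hp : p.natDegree ≤ m)
    (hq : q.natDegree ≤ m) :
    iteratedDeriv (2 * m + 1) (fun y => p.eval y * q.eval y * f y) t =
      (2 * m + 1).factorial *
        (revTaylorCoeff m t p ⬝ᵥ hankelMatrix (m + 1) f t *ᵥ revTaylorCoeff m t q) := by
  have hexpand : (fun y => p.eval y * q.eval y * f y) = fun y =>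
      ∑ i : Fin (m + 1), ∑ j : Fin (m + 1), (revTaylorCoeff m t p i * revTaylorCoeff m t q j) *
        ((y - t) ^ ((i.rev : ℕ) + j.rev) * f y) := by
    ext y
    rw [eval_eq_sum_revTaylorCoeff hp t y, eval_eq_sum_revTaylorCoeff hq t y, Finset.sum_mul_sum]
    simp only [Finset.sum_mul]
    exact Finset.sum_congr rfl fun i _ => Finset.sum_congr rfl fun j _ => by ring
  have hterm (i j : Fin (m + 1)) :
      iteratedDeriv (2 * m + 1) (fun y => (y - t) ^ ((i.rev : ℕ) + j.rev) * f y) t =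
        (2 * m + 1).factorial * hankelMatrix (m + 1) f t i j := by
    rw [iteratedDeriv_sub_pow_mul (by simp only [Fin.val_rev]; omega) hf,
      show 2 * m + 1 - ((i.rev : ℕ) + j.rev) = i + j + 1 by simp only [Fin.val_rev]; omega]
    rfl
  simp only [hexpand, dotProduct, mulVec, Finset.mul_sum]
  rw [iteratedDeriv_fun_sum fun i _ => by fun_prop]
  refine Finset.sum_congr rfl fun i _ => ?_
  rw [iteratedDeriv_fun_sum fun j _ => by fun_prop]
  refine Finset.sum_congr rfl fun j _ => ?_
  rw [iteratedDeriv_const_mul_field, hterm]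
  ring

end Hankel

section HermiteInterpolation

open Polynomial

/-- First-order contact at `z`: the polynomial `H` has the value and the derivative of `g` there,
as a Hermite interpolant of `g` has at each of its nodes. -/
def IsHermiteInterpolantAt (H : ℝ[X]) (g : ℝ → ℝ) (z : ℝ) : Prop :=
  H.eval z = g z ∧ HasDerivAt g (H.derivative.eval z) z

namespace IsHermiteInterpolantAt

theorem mul_left {H : ℝ[X]} {g : ℝ → ℝ} {z : ℝ} (h : IsHermiteInterpolantAt H g z) (P : ℝ[X]) :
    IsHermiteInterpolantAt (P * H) (fun y => P.eval y * g y) z :=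
  ⟨by simp [h.1], by simpa [derivative_mul, h.1] using (P.hasDerivAt z).fun_mul h.2⟩

theorem mul_left_of_eval_eq_zero {P H : ℝ[X]} {g : ℝ → ℝ} {z : ℝ} (hP : P.eval z = 0)
    (hH : H.eval z = g z) (hg : DifferentiableAt ℝ g z) :
    IsHermiteInterpolantAt (P * H) (fun y => P.eval y * g y) z :=
  ⟨by simp [hH], by simpa [derivative_mul, hP, hH] using (P.hasDerivAt z).fun_mul hg.hasDerivAt⟩

theorem sum {ι : Type*} {u : Finset ι} {H : ι → ℝ[X]} {g : ι → ℝ → ℝ} {z : ℝ}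
    (h : ∀ i ∈ u, IsHermiteInterpolantAt (H i) (g i) z) :
    IsHermiteInterpolantAt (∑ i ∈ u, H i) (fun y => ∑ i ∈ u, g i y) z := by
  refine ⟨?_, ?_⟩
  · rw [eval_finsetSum]
    exact Finset.sum_congr rfl fun i hi => (h i hi).1
  · rw [derivative_sum, eval_finsetSum]
    exact HasDerivAt.fun_sum fun i hi => (h i hi).2

end IsHermiteInterpolantAt

theorem exists_iteratedDeriv_eq_factorial_mul_coeff {s : Set ℝ} (hso : IsOpen s)
    (hs : s.OrdConnected) {m : ℕ} {g : ℝ → ℝ} (hg : ContDiffOn ℝ (2 * m + 1 : ℕ) g s)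
    {H : ℝ[X]} (hH : H.natDegree ≤ 2 * m + 1) {Z : Finset ℝ} (hZ : Z.card = m + 1)
    (hZs : ∀ z ∈ Z, z ∈ s) (hHg : ∀ z ∈ Z, IsHermiteInterpolantAt H g z) :
    ∃ t ∈ s, iteratedDeriv (2 * m + 1) g t = (2 * m + 1).factorial * H.coeff (2 * m + 1) := by
  have herror : ContDiffOn ℝ (2 * m + 1 : ℕ) (fun y => g y - H.eval y) s :=
    hg.sub (contDiff_polynomial_eval H).contDiffOn
  obtain ⟨t, ht, h0⟩ := exists_iteratedDeriv_eq_zero_of_double_zeros hs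
    (fun k hk => continuousOn_iteratedDeriv_of_isOpen hso herror (by omega)) hZ fun z hz =>
      ⟨hZs z hz, sub_eq_zero.2 (hHg z hz).1.symm,
        by simpa using ((hHg z hz).2.fun_sub (H.hasDerivAt z)).deriv⟩
  rw [iteratedDeriv_fun_sub (hg.contDiffAt (hso.mem_nhds ht))
    (contDiff_polynomial_eval H).contDiffAt, iteratedDeriv_polynomial_eval_of_natDegree_le hH,
    sub_eq_zero] at h0
  exact ⟨t, ht, h0⟩

end HermiteInterpolation

section SecantLine

open Polynomial

theorem dslope_comm {𝕜 E : Type*} [NontriviallyNormedField 𝕜] [NormedAddCommGroup E]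
    [NormedSpace 𝕜 E] (f : 𝕜 → E) (a b : 𝕜) : dslope f a b = dslope f b a := by
  rcases eq_or_ne a b with rfl | hab
  · rfl
  · rw [dslope_of_ne f hab.symm, dslope_of_ne f hab, slope_comm]

/-- The line through the points of the graph of `f` over `a` and `b`; the tangent line if
`a = b`. -/
noncomputable def secantLine (f : ℝ → ℝ) (a b : ℝ) : ℝ[X] :=
  C (f a) + C (dslope f a b) * (X - C a)

variable (f : ℝ → ℝ) (a b : ℝ)

theorem natDegree_secantLine_le : (secantLine f a b).natDegree ≤ 1 := by
  unfold secantLine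
  compute_degree

theorem coeff_one_secantLine : (secantLine f a b).coeff 1 = dslope f a b := by
  simp [secantLine]

theorem eval_left_secantLine : (secantLine f a b).eval a = f a := by
  simp [secantLine]

theorem eval_right_secantLine : (secantLine f a b).eval b = f b := by
  have h := sub_smul_dslope f a b
  simp only [secantLine, eval_add, eval_mul, eval_sub, eval_C, eval_X]
  rw [smul_eq_mul] at h
  linarith

theorem isHermiteInterpolantAt_secantLine_self (hf : DifferentiableAt ℝ f a) :
    IsHermiteInterpolantAt (secantLine f a a) f a :=
  ⟨eval_left_secantLine f a a, by simpa [secantLine] using hf.hasDerivAt⟩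

end SecantLine

section Loewner

open Polynomial Lagrange

/-- The Loewner matrix of `f` at the nodes `x`. Its entries are Mathlib's `dslope`, the first-order
divided difference that is the derivative on the diagonal. -/
noncomputable def loewnerMatrix {ι : Type*} (f : ℝ → ℝ) (x : ι → ℝ) : Matrix ι ι ℝ :=
  of fun i j => dslope f (x i) (x j)

theorem loewnerMatrix_apply {ι : Type*} (f : ℝ → ℝ) (x : ι → ℝ) (i j : ι) :
    loewnerMatrix f x i j =
      if x i = x j then deriv f (x i) else (f (x i) - f (x j)) / (x i - x j) := by
  rw [loewnerMatrix, of_apply]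
  split_ifs with h
  · rw [h, dslope_same]
  · rw [dslope_comm, dslope_of_ne f h, slope_def_field]

theorem isHermitian_loewnerMatrix {ι : Type*} (f : ℝ → ℝ) (x : ι → ℝ) :
    (loewnerMatrix f x).IsHermitian :=
  IsHermitian.ext fun i j => dslope_comm f (x j) (x i)

section NodalPolynomials

variable {ι : Type*} [Fintype ι] [DecidableEq ι] {m : ℕ} {f : ℝ → ℝ} {x : ι → ℝ}

/-- The polynomial `∑ i, v i * ∏ k ≠ i, (X - x k)`, whose square multiplies `f` in the divided
difference representing the Loewner form at `v`. -/
noncomputable def nodalCombination (x v : ι → ℝ) : ℝ[X] :=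
  ∑ i, C (v i) * nodal (Finset.univ.erase i) x

/-- The Hermite interpolant of `nodalCombination x v ^ 2 * f` at the nodes `x`, written as the
double sum of the products of two nodal polynomials and a secant line of `f`. -/
noncomputable def loewnerInterpolant (f : ℝ → ℝ) (x v : ι → ℝ) : ℝ[X] :=
  ∑ i, ∑ j, C (v i * v j) *
    (nodal (Finset.univ.erase i) x * (nodal (Finset.univ.erase j) x * secantLine f (x i) (x j)))

theorem natDegree_nodal_erase (hι : Fintype.card ι = m + 1) (x : ι → ℝ) (i : ι) :
    (nodal (Finset.univ.erase i) x).natDegree = m := by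
  simp [natDegree_nodal, hι]

theorem natDegree_nodalCombination_le (hι : Fintype.card ι = m + 1) (x v : ι → ℝ) :
    (nodalCombination x v).natDegree ≤ m :=
  natDegree_sum_le_of_forall_le _ _ fun i _ =>
    (natDegree_C_mul_le _ _).trans (natDegree_nodal_erase hι x i).le

theorem natDegree_nodal_mul_secantLine_le (hι : Fintype.card ι = m + 1) (f : ℝ → ℝ) (x : ι → ℝ)
    (i j : ι) : (nodal (Finset.univ.erase j) x * secantLine f (x i) (x j)).natDegree ≤ m + 1 :=
  natDegree_mul_le_of_le (natDegree_nodal_erase hι x j).le (natDegree_secantLine_le f _ _)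

theorem natDegree_loewnerInterpolant_le (hι : Fintype.card ι = m + 1) (f : ℝ → ℝ) (x v : ι → ℝ) :
    (loewnerInterpolant f x v).natDegree ≤ 2 * m + 1 :=
  natDegree_sum_le_of_forall_le _ _ fun i _ => natDegree_sum_le_of_forall_le _ _ fun j _ =>
    (natDegree_C_mul_le _ _).trans <|
      (natDegree_mul_le_of_le (natDegree_nodal_erase hι x i).le
        (natDegree_nodal_mul_secantLine_le hι f x i j)).trans (by omega)

theorem coeff_loewnerInterpolant (hι : Fintype.card ι = m + 1) (f : ℝ → ℝ) (x v : ι → ℝ) :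
    (loewnerInterpolant f x v).coeff (2 * m + 1) = v ⬝ᵥ loewnerMatrix f x *ᵥ v := by
  have hdeg (i : ι) := natDegree_nodal_erase hι x i
  have hmonic (i : ι) : (nodal (Finset.univ.erase i) x).coeff m = 1 := by
    rw [← hdeg i]
    exact nodal_monic
  have hcoeff (i j : ι) : (nodal (Finset.univ.erase i) x *
      (nodal (Finset.univ.erase j) x * secantLine f (x i) (x j))).coeff (2 * m + 1) =
        loewnerMatrix f x i j := by
    rw [show 2 * m + 1 = m + (m + 1) by ring,
      coeff_mul_add_eq_of_natDegree_le (hdeg i).le (natDegree_nodal_mul_secantLine_le hι f x i j),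
      coeff_mul_add_eq_of_natDegree_le (hdeg j).le (natDegree_secantLine_le f _ _),
      hmonic, hmonic, coeff_one_secantLine, one_mul, one_mul, loewnerMatrix, of_apply]
  simp only [loewnerInterpolant, finsetSum_coeff, coeff_C_mul, hcoeff, dotProduct, mulVec,
    Finset.mul_sum]
  exact Finset.sum_congr rfl fun i _ => Finset.sum_congr rfl fun j _ => by ring

theorem isHermiteInterpolantAt_nodal_mul_nodal_mul_secantLine {k : ι}
    (hf : DifferentiableAt ℝ f (x k)) (i j : ι) :
    IsHermiteInterpolantAt
      (nodal (Finset.univ.erase i) x * (nodal (Finset.univ.erase j) x * secantLine f (x i) (x j)))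
      (fun y => (nodal (Finset.univ.erase i) x).eval y *
        ((nodal (Finset.univ.erase j) x).eval y * f y)) (x k) := by
  have hroot {l : ι} (hl : k ≠ l) : (nodal (Finset.univ.erase l) x).eval (x k) = 0 :=
    eval_nodal_at_node (Finset.mem_erase.2 ⟨hl, Finset.mem_univ k⟩)
  rcases eq_or_ne k i with rfl | hi
  · rcases eq_or_ne k j with rfl | hj
    · exact ((isHermiteInterpolantAt_secantLine_self f (x k) hf).mul_left _).mul_left _
    · exact (IsHermiteInterpolantAt.mul_left_of_eval_eq_zero (hroot hj)
        (eval_left_secantLine f _ _) hf).mul_left _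
  · refine .mul_left_of_eval_eq_zero (hroot hi) ?_ (by fun_prop)
    rcases eq_or_ne k j with rfl | hj
    · rw [eval_mul, eval_right_secantLine]
    · rw [eval_mul, hroot hj, zero_mul, zero_mul]

theorem isHermiteInterpolantAt_loewnerInterpolant (v : ι → ℝ) {k : ι}
    (hf : DifferentiableAt ℝ f (x k)) :
    IsHermiteInterpolantAt (loewnerInterpolant f x v)
      (fun y => (nodalCombination x v).eval y * (nodalCombination x v).eval y * f y) (x k) := by
  have hexpand (y : ℝ) :
      (nodalCombination x v).eval y * (nodalCombination x v).eval y * f y =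
        ∑ i, ∑ j, (C (v i * v j)).eval y * ((nodal (Finset.univ.erase i) x).eval y *
          ((nodal (Finset.univ.erase j) x).eval y * f y)) := by
    simp only [nodalCombination, eval_finsetSum, eval_mul, eval_C]
    rw [Finset.sum_mul_sum]
    simp only [Finset.sum_mul]
    exact Finset.sum_congr rfl fun i _ => Finset.sum_congr rfl fun j _ => by ring
  simp only [hexpand]
  exact .sum fun i _ => .sum fun j _ =>
    (isHermiteInterpolantAt_nodal_mul_nodal_mul_secantLine hf i j).mul_left _

end NodalPolynomials

variable {s : Set ℝ} {f : ℝ → ℝ} {ι : Type*} [Fintype ι] {x : ι → ℝ}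

theorem exists_loewner_form_eq_hankel_form (hso : IsOpen s) (hs : s.OrdConnected) {m : ℕ}
    (hι : Fintype.card ι = m + 1) (hf : ContDiffOn ℝ (2 * m + 1 : ℕ) f s) (hx : ∀ i, x i ∈ s)
    (hinj : Function.Injective x) (v : ι → ℝ) :
    ∃ t ∈ s, ∃ c : Fin (m + 1) → ℝ,
      v ⬝ᵥ loewnerMatrix f x *ᵥ v = c ⬝ᵥ hankelMatrix (m + 1) f t *ᵥ c := by
  classical
  set q := nodalCombination x v
  have hq : q.natDegree ≤ m := natDegree_nodalCombination_le hι x v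
  have hcontDiffAt {y : ℝ} (hy : y ∈ s) : ContDiffAt ℝ (2 * m + 1 : ℕ) f y :=
    hf.contDiffAt (hso.mem_nhds hy)
  have hdiff (k : ι) : DifferentiableAt ℝ f (x k) :=
    (hcontDiffAt (hx k)).differentiableAt (by norm_cast)
  obtain ⟨t, ht, heq⟩ := exists_iteratedDeriv_eq_factorial_mul_coeff hso hs
    (g := fun y => q.eval y * q.eval y * f y)
    (((contDiff_polynomial_eval q).mul (contDiff_polynomial_eval q)).contDiffOn.mul hf)
    (natDegree_loewnerInterpolant_le hι f x v) (Z := Finset.univ.map ⟨x, hinj⟩) (by simpa using hι)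
    (by simpa using hx)
    (by simpa using fun k => isHermiteInterpolantAt_loewnerInterpolant v (hdiff k))
  rw [iteratedDeriv_eval_mul_eval_mul (hcontDiffAt ht) hq hq, coeff_loewnerInterpolant hι] at heq
  exact ⟨t, ht, revTaylorCoeff m t q,
    (mul_left_cancel₀ (Nat.cast_ne_zero.2 (Nat.factorial_ne_zero _)) heq).symm⟩

theorem posSemidef_loewnerMatrix_of_injective (hso : IsOpen s) (hs : s.OrdConnected) {m : ℕ}
    (hι : Fintype.card ι = m + 1) (hf : ContDiffOn ℝ (2 * m + 1 : ℕ) f s)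
    (hM : ∀ t ∈ s, (hankelMatrix (m + 1) f t).PosSemidef) (hx : ∀ i, x i ∈ s)
    (hinj : Function.Injective x) : (loewnerMatrix f x).PosSemidef := by
  refine .of_dotProduct_mulVec_nonneg (isHermitian_loewnerMatrix f x) fun v => ?_
  obtain ⟨t, ht, c, hvc⟩ := exists_loewner_form_eq_hankel_form hso hs hι hf hx hinj v
  rw [star_trivial, hvc]
  exact (hM t ht).dotProduct_mulVec_nonneg c

theorem posSemidef_loewnerMatrix (hso : IsOpen s) (hs : s.OrdConnected) {n : ℕ}
    (hι : Fintype.card ι ≤ n) (hf : ContDiffOn ℝ (2 * n - 1 : ℕ) f s)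
    (hM : ∀ t ∈ s, (hankelMatrix n f t).PosSemidef) (hx : ∀ i, x i ∈ s) :
    (loewnerMatrix f x).PosSemidef := by
  cases isEmpty_or_nonempty ι with
  | inl _ => exact Subsingleton.elim 0 (loewnerMatrix f x) ▸ .zero
  | inr _ =>
    let Z := Finset.univ.image x
    obtain ⟨m, hm⟩ : ∃ m, Z.card = m + 1 :=
      Nat.exists_eq_succ_of_ne_zero (Finset.univ_nonempty.image x).card_ne_zero
    have hmn : m + 1 ≤ n := hm ▸ Finset.card_image_le.trans hι
    have hZ : (loewnerMatrix f ((↑) : Z → ℝ)).PosSemidef :=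
      posSemidef_loewnerMatrix_of_injective hso hs (by simpa using hm)
        (hf.of_le (by exact_mod_cast (by omega : 2 * m + 1 ≤ 2 * n - 1)))
        (fun t ht => posSemidef_hankelMatrix_of_le hmn (hM t ht)) (by simpa [Z] using hx)
        Subtype.val_injective
    exact hZ.submatrix fun i => ⟨x i, Finset.mem_image_of_mem x (Finset.mem_univ i)⟩

end Loewner

theorem stmt10_general {s : Set ℝ} (hso : IsOpen s) (hs : s.OrdConnected) {n : ℕ} {f : ℝ → ℝ}
    (hf : ContDiffOn ℝ (2 * n - 1 : ℕ) f s)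
    (hM : ∀ t ∈ s,
      (Matrix.of fun i j : Fin n =>
        iteratedDerivWithin (i.val + j.val + 1) f s t /
          (Nat.factorial (i.val + j.val + 1) : ℝ)).PosSemidef)
    {lam : Fin n → ℝ} (hlam : ∀ i, lam i ∈ s) :
    (Matrix.of fun i j : Fin n =>
      if lam i = lam j then derivWithin f s (lam i)
      else (f (lam i) - f (lam j)) / (lam i - lam j)).PosSemidef := by
  have hHankel (t : ℝ) (ht : t ∈ s) : (hankelMatrix n f t).PosSemidef := by
    simpa only [hankelMatrix, iteratedDerivWithin_of_isOpen hso ht] using hM t ht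
  convert posSemidef_loewnerMatrix hso hs (Fintype.card_fin n).le hf hHankel hlam using 1
  ext i j
  rw [of_apply, loewnerMatrix_apply, derivWithin_of_isOpen hso (hlam i)]

/-- If the Hankel matrix `M_n(t,f)` is positive semi-definite for all `t ∈ (a,b)`, then every
`n×n` Loewner matrix of `f` over `(a,b)` is positive semi-definite. -/
theorem stmt10 (n : ℕ) (hn : 2 ≤ n) (a b : ℝ) (f : ℝ → ℝ)
    (hf : ContDiffOn ℝ (2 * n - 1 : ℕ) f (Ioo a b))
    (hM : ∀ t ∈ Ioo a b,
      (Matrix.of fun i j : Fin n =>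
        iteratedDerivWithin (i.val + j.val + 1) f (Ioo a b) t /
          (Nat.factorial (i.val + j.val + 1) : ℝ)).PosSemidef) :
    ∀ lam : Fin n → ℝ, (∀ i, lam i ∈ Ioo a b) →
      (Matrix.of fun i j : Fin n =>
        if lam i = lam j then derivWithin f (Ioo a b) (lam i)
        else (f (lam i) - f (lam j)) / (lam i - lam j)).PosSemidef :=
  fun _ hlam => stmt10_general isOpen_Ioo ordConnected_Ioo hf hM hlam
end

section
/- Let n ≥ 2 and f ∈ C^{2n}(a,b). If the Hankel matrix K_n(t,f) = (f^{(i+j)}(t)/(i+j)!)_{ij} is positive semi-definite for every t ∈ (a,b), then f is matrix convex of order n on (a,b): for Hermitian n×n matrices A, B with spectra in (a,b) and λ ∈ [0,1], f(λA+(1−λ)B) ≤ λf(A)+(1−λ)f(B). -/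
open Set Matrix
open scoped ComplexOrder

/-!
For a polynomial `P` and nodes `x 1, …, x n`, the quadratic form of the Kraus matrix with entries
`[x i, x k, y]P` is the divided difference of `Q² P` with double nodes at the `x i` and a simple
node at `y`, where `Q` is a polynomial of degree `< n`. By the Hermite–Genocchi formula this is a
weighted average of values of `(Q² P)^(2n)`, and `(Q² P)^(2n)(t) / (2n)!` is a value of the Hankel
form of the Taylor coefficients of `P` at `t`, so the Kraus matrices are positive semidefinite. In
an eigenbasis of `A`, the second Taylor coefficient of `s ↦ P(A + s H)` at `0` is a sum of
congruences of Kraus matrices, hence positive semidefinite, and `P` is matrix convex.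

For a general `f`, adding `ε ∑ k, (σ k - t)⁻¹`, whose Hankel matrix is positive definite by a
Vandermonde factorization, makes the Hankel condition strict on a compact interval, so that it
passes to polynomials approximating the sum in `C^{2n}`. Then let `ε → 0`.
-/

section DividedDifferences

open Polynomial

variable {R : Type*} [CommRing R]

lemma add_divByMonic (q P₁ P₂ : R[X]) : (P₁ + P₂) /ₘ q = P₁ /ₘ q + P₂ /ₘ q := by
  nontriviality R
  by_cases hq : q.Monic
  · refine (div_modByMonic_unique _ (P₁ %ₘ q + P₂ %ₘ q) hq ⟨?_, ?_⟩).1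
    · linear_combination modByMonic_add_div P₁ q + modByMonic_add_div P₂ q
    · rw [← add_modByMonic]
      exact degree_modByMonic_lt _ hq
  · simp only [divByMonic_eq_of_not_monic _ hq, add_zero]

lemma smul_divByMonic (q : R[X]) (c : R) (P : R[X]) : (c • P) /ₘ q = c • (P /ₘ q) := by
  nontriviality R
  by_cases hq : q.Monic
  · refine (div_modByMonic_unique _ (c • (P %ₘ q)) hq ⟨?_, ?_⟩).1
    · rw [mul_smul_comm, ← smul_add, modByMonic_add_div]
    · exact (degree_smul_le _ _).trans_lt (degree_modByMonic_lt _ hq)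
  · simp only [divByMonic_eq_of_not_monic _ hq, smul_zero]

lemma divByMonic_mul (P : R[X]) {q r : R[X]} (hq : q.Monic) (hr : r.Monic) :
    P /ₘ (q * r) = P /ₘ q /ₘ r := by
  nontriviality R
  refine (div_modByMonic_unique _ (P %ₘ q + q * ((P /ₘ q) %ₘ r)) (hq.mul hr) ⟨?_, ?_⟩).1
  · linear_combination modByMonic_add_div P q + q * modByMonic_add_div (P /ₘ q) r
  · rw [hr.degree_mul]
    refine (degree_add_le _ _).trans_lt (max_lt ?_ ?_)
    · calc (P %ₘ q).degree < q.degree := degree_modByMonic_lt _ hq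
        _ ≤ q.degree + r.degree := le_add_of_nonneg_right (zero_le_degree_iff.2 hr.ne_zero)
    · rw [hq.degree_mul_comm, hq.degree_mul, add_comm, degree_eq_natDegree hq.ne_zero]
      exact WithBot.add_lt_add_left (by simp) (degree_modByMonic_lt _ hr)

lemma X_mul_divByMonic_X_sub_C (P : R[X]) (x : R) :
    (X * P) /ₘ (X - C x) = X * (P /ₘ (X - C x)) + C (P.eval x) := by
  nontriviality R
  refine (div_modByMonic_unique _ (C (x * P.eval x)) (monic_X_sub_C x) ⟨?_, ?_⟩).1
  · have hdiv := modByMonic_add_div P (X - C x)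
    rw [modByMonic_X_sub_C_eq_C_eval] at hdiv
    rw [C_mul]
    linear_combination X * hdiv
  · rw [degree_X_sub_C]
    exact degree_C_lt

lemma eval_divByMonic_X_sub_C_comm (P : R[X]) (x y : R) :
    (P /ₘ (X - C x)).eval y = (P /ₘ (X - C y)).eval x := by
  nontriviality R
  set Q := P /ₘ (X - C x)
  have hquot : P /ₘ (X - C y) = (X - C x) * (Q /ₘ (X - C y)) + C (Q.eval y) := by
    refine (div_modByMonic_unique _ (C (P.eval x + (y - x) * Q.eval y)) (monic_X_sub_C y)
      ⟨?_, ?_⟩).1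
    · have hP := modByMonic_add_div P (X - C x)
      have hQ := modByMonic_add_div Q (X - C y)
      rw [modByMonic_X_sub_C_eq_C_eval] at hP hQ
      simp only [C_add, C_mul, C_sub]
      linear_combination hP + (X - C x) * hQ
    · rw [degree_X_sub_C]
      exact degree_C_lt
  simp only [hquot, eval_add, eval_mul, eval_sub, eval_X, eval_C, sub_self, zero_mul, zero_add]

/-- The divided difference of a polynomial at the nodes of `s` together with `y`, counted with
multiplicity. Newton's formula identifies it with the value at `y` of the quotient of `P` by
`∏ (X - x)`, `x` ranging over `s`; unlike the usual recursion this allows coinciding nodes. -/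
noncomputable def divDiff (P : R[X]) (s : Multiset R) (y : R) : R :=
  (P /ₘ (s.map fun x => X - C x).prod).eval y

lemma divDiff_cons (P : R[X]) (x : R) (s : Multiset R) (y : R) :
    divDiff P (x ::ₘ s) y = divDiff (P /ₘ (X - C x)) s y := by
  rw [divDiff, Multiset.map_cons, Multiset.prod_cons,
    divByMonic_mul _ (monic_X_sub_C x) (monic_multisetProd_X_sub_C s), divDiff]

lemma divDiff_zero (P : R[X]) (y : R) : divDiff P 0 y = P.eval y := by
  rw [divDiff, Multiset.map_zero, Multiset.prod_zero, divByMonic_one]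

lemma divDiff_cons_comm (P : R[X]) (x y : R) (s : Multiset R) :
    divDiff P (x ::ₘ s) y = divDiff P (y ::ₘ s) x := by
  simp only [divDiff, Multiset.map_cons, Multiset.prod_cons, mul_comm (X - C _),
    divByMonic_mul _ (monic_multisetProd_X_sub_C s) (monic_X_sub_C _)]
  exact eval_divByMonic_X_sub_C_comm _ x y

lemma divDiff_add (P Q : R[X]) (s : Multiset R) (y : R) :
    divDiff (P + Q) s y = divDiff P s y + divDiff Q s y := by
  rw [divDiff, add_divByMonic, eval_add, divDiff, divDiff]

lemma divDiff_smul (c : R) (P : R[X]) (s : Multiset R) (y : R) :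
    divDiff (c • P) s y = c * divDiff P s y := by
  rw [divDiff, smul_divByMonic, eval_smul, smul_eq_mul, divDiff]

lemma divDiff_sum {κ : Type*} (t : Finset κ) (P : κ → R[X]) (s : Multiset R) (y : R) :
    divDiff (∑ k ∈ t, P k) s y = ∑ k ∈ t, divDiff (P k) s y :=
  map_sum (AddMonoidHom.mk' (fun Q => divDiff Q s y) fun Q₁ Q₂ => divDiff_add Q₁ Q₂ s y) P t

lemma divDiff_C_cons (c x : R) (s : Multiset R) (y : R) :
    divDiff (C c) (x ::ₘ s) y = 0 := by
  nontriviality R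
  have hquot : (C c : R[X]) /ₘ (X - C x) = 0 := by
    rw [divByMonic_eq_zero_iff (monic_X_sub_C x), degree_X_sub_C]
    exact degree_C_lt
  rw [divDiff_cons, hquot, divDiff, zero_divByMonic, eval_zero]

lemma divDiff_X_mul_cons (P : R[X]) (x : R) (s : Multiset R) (y : R) :
    divDiff (X * P) (x ::ₘ s) y = divDiff P s x + y * divDiff P (x ::ₘ s) y := by
  induction s using Multiset.induction_on generalizing P with
  | empty =>
    simp only [divDiff_cons, divDiff_zero, X_mul_divByMonic_X_sub_C, eval_add, eval_mul, eval_X,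
      eval_C]
    ring
  | cons z s ih =>
    rw [Multiset.cons_swap, divDiff_cons, X_mul_divByMonic_X_sub_C, divDiff_add, ih,
      divDiff_C_cons, add_zero, ← divDiff_cons, ← divDiff_cons]

lemma divDiff_prod_X_sub_C_mul (P : R[X]) (s t : Multiset R) (y : R) :
    divDiff ((t.map fun x => X - C x).prod * P) (t + s) y = divDiff P s y := by
  rw [divDiff, Multiset.map_add, Multiset.prod_add,
    divByMonic_mul _ (monic_multisetProd_X_sub_C t) (monic_multisetProd_X_sub_C s),
    mul_divByMonic_cancel_left _ (monic_multisetProd_X_sub_C t), divDiff]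

end DividedDifferences

section HermiteGenocchi

open Polynomial

lemma eval_iterate_derivative_divByMonic_X_sub_C (P : ℝ[X]) (x y : ℝ) (m : ℕ) :
    (derivative^[m] (P /ₘ (X - C x))).eval y =
      ∫ θ in (0 : ℝ)..1, θ ^ m * (derivative^[m + 1] P).eval (x + θ * (y - x)) := by
  set Q := P /ₘ (X - C x)
  have hP : P = (X - C x) * Q + C (P.eval x) := by
    rw [← modByMonic_X_sub_C_eq_C_eval, add_comm, modByMonic_add_div]
  have hPderiv : derivative^[m + 1] P =
      (X - C x) * derivative^[m + 1] Q + (m + 1) • derivative^[m] Q := by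
    conv_lhs => rw [hP, sub_mul, mul_comm X]
    rw [iterate_map_add, iterate_derivative_sub, iterate_derivative_mul_X,
      iterate_derivative_C_mul, iterate_derivative_C m.succ_pos, Nat.add_sub_cancel]
    ring
  have hderiv (θ : ℝ) : HasDerivAt
      (fun θ : ℝ => θ ^ (m + 1) * (derivative^[m] Q).eval (x + θ * (y - x)))
      (θ ^ m * (derivative^[m + 1] P).eval (x + θ * (y - x))) θ := by
    have hline : HasDerivAt (fun θ : ℝ => x + θ * (y - x)) (y - x) θ := by
      simpa using ((hasDerivAt_id θ).mul_const (y - x)).const_add x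
    convert! (hasDerivAt_pow (m + 1) θ).mul
      (((derivative^[m] Q).hasDerivAt _).comp θ hline) using 1
    rw [hPderiv, Function.iterate_succ_apply']
    simp only [eval_add, eval_mul, eval_sub, eval_X, eval_C, nsmul_eq_mul, eval_natCast,
      Function.comp_apply, add_tsub_cancel_right]
    ring
  rw [intervalIntegral.integral_eq_sub_of_hasDerivAt (fun θ _ => hderiv θ)
    (Continuous.intervalIntegrable (by fun_prop) _ _)]
  simp

lemma eval_iterate_derivative_divByMonic_prod_nonneg {S : Set ℝ} (hS : Convex ℝ S) {P : ℝ[X]}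
    {s : Multiset ℝ} (hs : ∀ x ∈ s, x ∈ S) {m : ℕ}
    (hP : ∀ t ∈ S, 0 ≤ (derivative^[m + s.card] P).eval t) :
    ∀ t ∈ S, 0 ≤ (derivative^[m] (P /ₘ (s.map fun x => X - C x).prod)).eval t := by
  induction s using Multiset.induction_on generalizing P with
  | empty => simpa using hP
  | cons x s ih =>
    rw [Multiset.forall_mem_cons] at hs
    rw [Multiset.map_cons, Multiset.prod_cons,
      divByMonic_mul _ (monic_X_sub_C x) (monic_multisetProd_X_sub_C s)]
    refine ih hs.2 fun t ht => ?_
    rw [eval_iterate_derivative_divByMonic_X_sub_C]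
    refine intervalIntegral.integral_nonneg zero_le_one fun θ hθ =>
      mul_nonneg (pow_nonneg hθ.1 _) ?_
    rw [Multiset.card_cons, ← add_assoc] at hP
    exact hP _ (hS.add_smul_sub_mem hs.1 ht hθ)

lemma divDiff_nonneg {S : Set ℝ} (hS : Convex ℝ S) {P : ℝ[X]} {s : Multiset ℝ}
    (hs : ∀ x ∈ s, x ∈ S) (hP : ∀ t ∈ S, 0 ≤ (derivative^[s.card] P).eval t) {y : ℝ}
    (hy : y ∈ S) : 0 ≤ divDiff P s y :=
  eval_iterate_derivative_divByMonic_prod_nonneg (m := 0) hS hs (by simpa using hP) y hy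

end HermiteGenocchi

section KrausMatrices

open Polynomial

/-- The Hankel matrix `(c (i + j + 2))` of size `n`. When `c` is the sequence of Taylor coefficients
of `f` at `t` this is the matrix `K_n(t, f)`. -/
def hankel {R : Type*} (n : ℕ) (c : ℕ → R) : Matrix (Fin n) (Fin n) R :=
  of fun i j => c (i + j + 2)

lemma sum_C_coeff_mul_X_pow_of_degree_lt {R : Type*} [Semiring R] {n : ℕ} {Q : R[X]}
    (hQ : Q.degree < n) :
    ∑ i : Fin n, C (Q.coeff (n - 1 - i)) * X ^ (n - 1 - i : ℕ) = Q := by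
  have hrev (i : Fin n) : n - 1 - (Fin.revPerm i : ℕ) = i := by
    rw [Fin.revPerm_apply, Fin.val_rev]
    omega
  rw [← Equiv.sum_comp Fin.revPerm]
  simp only [hrev]
  rw [sum_fin (fun i c => C c * X ^ i) (by simp) hQ, sum_C_mul_X_pow_eq]

lemma dotProduct_hankel_mulVec_coeff {R : Type*} [CommRing R] {n : ℕ} {Q : R[X]}
    (hQ : Q.degree < n) (P : R[X]) :
    (fun i : Fin n => Q.coeff (n - 1 - i)) ⬝ᵥ hankel n P.coeff *ᵥ (fun i => Q.coeff (n - 1 - i)) =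
      (Q * Q * P).coeff (2 * n) := by
  set q := fun i : Fin n => Q.coeff (n - 1 - i)
  have hterm (i j : Fin n) : (C (q i) * X ^ (n - 1 - i : ℕ) * (C (q j) * X ^ (n - 1 - j : ℕ)) *
      P).coeff (2 * n) = q i * (P.coeff (i + j + 2) * q j) := by
    have hindex : 2 * n = (i + j + 2) + ((n - 1 - i) + (n - 1 - j)) := by omega
    have hmonomial : C (q i) * X ^ (n - 1 - i : ℕ) * (C (q j) * X ^ (n - 1 - j : ℕ)) * P =
        C (q i * q j) * (P * X ^ ((n - 1 - i) + (n - 1 - j) : ℕ)) := by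
      rw [C_mul, pow_add]
      ring
    rw [hmonomial, coeff_C_mul, hindex, coeff_mul_X_pow]
    ring
  conv_rhs => rw [← sum_C_coeff_mul_X_pow_of_degree_lt hQ]
  rw [Finset.sum_mul_sum, Finset.sum_mul, finsetSum_coeff]
  simp only [Finset.sum_mul, finsetSum_coeff, dotProduct, mulVec, Finset.mul_sum]
  exact Finset.sum_congr rfl fun i _ => Finset.sum_congr rfl fun j _ => (hterm i j).symm

lemma coeff_mul_self_mul_nonneg {n : ℕ} {Q P : ℝ[X]} (hQ : Q.degree < n)
    (hP : (hankel n P.coeff).PosSemidef) : 0 ≤ (Q * Q * P).coeff (2 * n) := by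
  rw [← dotProduct_hankel_mulVec_coeff hQ]
  exact hP.dotProduct_mulVec_nonneg _

lemma eval_iterate_derivative_mul_self_mul_nonneg {n : ℕ} {Q P : ℝ[X]} (hQ : Q.degree < n) {t : ℝ}
    (hP : (hankel n (taylor t P).coeff).PosSemidef) :
    0 ≤ (derivative^[2 * n] (Q * Q * P)).eval t := by
  have hcoeff : 0 ≤ (taylor t (Q * Q * P)).coeff (2 * n) := by
    rw [taylor_mul, taylor_mul]
    exact coeff_mul_self_mul_nonneg (by rwa [degree_taylor]) hP
  rw [taylor_coeff] at hcoeff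
  rw [← factorial_smul_hasseDeriv, LinearMap.smul_apply, eval_smul]
  exact nsmul_nonneg hcoeff _

variable {ι : Type*}

/-- The Kraus matrix of `P` with nodes `x` and distinguished point `y`, with entries
`[x i, x k, y]P`. -/
noncomputable def krausMatrix {R : Type*} [CommRing R] (P : R[X]) (x : ι → R) (y : R) :
    Matrix ι ι R :=
  of fun i k => divDiff P {x i, x k} y

variable [Fintype ι]

lemma dotProduct_krausMatrix_mulVec {R : Type*} [CommRing R] [DecidableEq ι] (P : R[X])
    (x : ι → R) (y : R) (w : ι → R) :
    w ⬝ᵥ krausMatrix P x y *ᵥ w =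
      divDiff ((∑ i, w i • Lagrange.nodal (Finset.univ.erase i) x) *
        (∑ i, w i • Lagrange.nodal (Finset.univ.erase i) x) * P)
        (Finset.univ.val.map x + Finset.univ.val.map x) y := by
  set N := fun i => (Finset.univ.erase i).val.map x
  have hN (i : ι) : x i ::ₘ N i = Finset.univ.val.map x := by
    rw [← Multiset.map_cons, Finset.erase_val, Multiset.cons_erase (Finset.mem_univ_val i)]
  have hnodal (i : ι) : Lagrange.nodal (Finset.univ.erase i) x =
      ((N i).map fun z => X - C z).prod := by
    rw [Multiset.map_map]; rfl
  have hentry (i k : ι) : divDiff (Lagrange.nodal (Finset.univ.erase i) x *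
      Lagrange.nodal (Finset.univ.erase k) x * P)
        (Finset.univ.val.map x + Finset.univ.val.map x) y = krausMatrix P x y i k := by
    rw [hnodal, hnodal, ← Multiset.prod_add, ← Multiset.map_add]
    nth_rw 1 [← hN i]
    rw [← hN k, Multiset.cons_add, Multiset.add_cons, ← Multiset.singleton_add,
      ← Multiset.singleton_add (x k), ← add_assoc, add_comm _ (N i + N k),
      divDiff_prod_X_sub_C_mul]
    rfl
  simp only [dotProduct, mulVec, Finset.mul_sum, Finset.sum_mul, divDiff_sum, smul_mul_assoc,
    mul_smul_comm, divDiff_smul, hentry]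
  rw [Finset.sum_comm]
  exact Finset.sum_congr rfl fun i _ => Finset.sum_congr rfl fun k _ => by ring

lemma posSemidef_krausMatrix {S : Set ℝ} (hS : Convex ℝ S) {P : ℝ[X]}
    (hP : ∀ t ∈ S, (hankel (Fintype.card ι) (taylor t P).coeff).PosSemidef) {x : ι → ℝ}
    (hx : ∀ i, x i ∈ S) {y : ℝ} (hy : y ∈ S) : (krausMatrix P x y).PosSemidef := by
  classical
  refine .of_dotProduct_mulVec_nonneg ?_ fun w => ?_
  · ext i k
    simp only [krausMatrix, conjTranspose_apply, of_apply, star_trivial]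
    rw [Multiset.pair_comm]
  · rw [star_trivial, dotProduct_krausMatrix_mulVec]
    refine divDiff_nonneg hS ?_ (fun t ht => ?_) hy
    · simpa [or_self] using hx
    · rw [Multiset.card_add, Multiset.card_map, Finset.card_val, ← two_mul, Finset.card_univ]
      refine eval_iterate_derivative_mul_self_mul_nonneg ?_ (hP t ht)
      rw [← mem_degreeLT]
      refine Submodule.sum_smul_mem _ _ fun i _ => mem_degreeLT.2 ?_
      rw [Lagrange.degree_nodal, Nat.cast_lt, ← Finset.card_univ]
      exact Finset.card_erase_lt_of_mem (Finset.mem_univ i)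

end KrausMatrices

section TaylorCoefficients

open Polynomial

variable {R 𝔸 : Type*} [CommRing R] [Ring 𝔸] [Algebra R 𝔸]

/-- The coefficient of `s ^ m` in `P (a + s h)`, for `a` and `h` in a possibly noncommutative
algebra. -/
noncomputable def taylorCoeff (P : R[X]) (a h : 𝔸) (m : ℕ) : 𝔸 :=
  (aeval (C a + X * C h : 𝔸[X]) P).coeff m

lemma taylorCoeff_add (P Q : R[X]) (a h : 𝔸) (m : ℕ) :
    taylorCoeff (P + Q) a h m = taylorCoeff P a h m + taylorCoeff Q a h m := by
  rw [taylorCoeff, map_add, coeff_add, taylorCoeff, taylorCoeff]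

lemma taylorCoeff_C_zero (c : R) (a h : 𝔸) : taylorCoeff (C c) a h 0 = algebraMap R 𝔸 c := by
  rw [taylorCoeff, aeval_C, Polynomial.algebraMap_apply, coeff_C_zero]

lemma taylorCoeff_C_succ (c : R) (a h : 𝔸) (m : ℕ) : taylorCoeff (C c) a h (m + 1) = 0 := by
  rw [taylorCoeff, aeval_C, Polynomial.algebraMap_apply, coeff_C_succ]

lemma taylorCoeff_X_mul_zero (P : R[X]) (a h : 𝔸) :
    taylorCoeff (X * P) a h 0 = a * taylorCoeff P a h 0 := by
  rw [taylorCoeff, map_mul, aeval_X, add_mul, mul_assoc, coeff_add, coeff_C_mul, coeff_X_mul_zero,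
    add_zero, taylorCoeff]

lemma taylorCoeff_X_mul_succ (P : R[X]) (a h : 𝔸) (m : ℕ) :
    taylorCoeff (X * P) a h (m + 1) = h * taylorCoeff P a h m + a * taylorCoeff P a h (m + 1) := by
  rw [taylorCoeff, map_mul, aeval_X, add_mul, mul_assoc, coeff_add, coeff_C_mul, coeff_X_mul,
    coeff_C_mul, add_comm, taylorCoeff, taylorCoeff]

lemma map_taylorCoeff {𝔹 : Type*} [Ring 𝔹] [Algebra R 𝔹] (φ : 𝔸 →ₐ[R] 𝔹) (P : R[X])
    (a h : 𝔸) (m : ℕ) : φ (taylorCoeff P a h m) = taylorCoeff P (φ a) (φ h) m := by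
  have hmap := aeval_algHom_apply (mapAlgHom φ) (C a + X * C h : 𝔸[X]) P
  simp only [map_add, map_mul, coe_mapAlgHom, map_C, map_X, RingHom.coe_coe] at hmap
  rw [taylorCoeff, taylorCoeff, hmap, coeff_map, RingHom.coe_coe]

lemma induction_C_add_X_mul {motive : R[X] → Prop} (P : R[X]) (hC : ∀ c, motive (C c))
    (hadd : ∀ P Q, motive P → motive Q → motive (P + Q))
    (hX_mul : ∀ P, motive P → motive (X * P)) : motive P := by
  refine P.induction_on hC hadd fun m c hm => ?_
  rw [pow_succ', mul_left_comm]
  exact hX_mul _ hm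

lemma taylorCoeff_zero (P : R[X]) (a h : 𝔸) : taylorCoeff P a h 0 = aeval a P := by
  induction P using induction_C_add_X_mul with
  | hC c => rw [taylorCoeff_C_zero, aeval_C]
  | hadd P Q hP hQ => rw [taylorCoeff_add, hP, hQ, map_add]
  | hX_mul P hP => rw [taylorCoeff_X_mul_zero, hP, map_mul, aeval_X]

end TaylorCoefficients

lemma hasDerivAt_taylorCoeff {𝔸 : Type*} [NormedRing 𝔸] [NormedAlgebra ℝ 𝔸]
    (P : Polynomial ℝ) (a h : 𝔸) (m : ℕ) (s : ℝ) :
    HasDerivAt (fun s : ℝ => taylorCoeff P (a + s • h) h m)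
      ((m + 1) • taylorCoeff P (a + s • h) h (m + 1)) s := by
  have hline : HasDerivAt (fun s : ℝ => a + s • h) h s := by
    simpa using ((hasDerivAt_id s).smul_const h).const_add a
  induction P using induction_C_add_X_mul generalizing m with
  | hC c =>
    cases m <;> simpa only [taylorCoeff_C_zero, taylorCoeff_C_succ, smul_zero] using
      hasDerivAt_const s _
  | hadd P Q hP hQ =>
    simpa only [taylorCoeff_add, smul_add] using (hP m).fun_add (hQ m)
  | hX_mul P hP =>
    cases m with
    | zero =>
      simpa only [taylorCoeff_X_mul_zero, taylorCoeff_X_mul_succ, zero_add, one_smul] using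
        hline.fun_mul (hP 0)
    | succ m =>
      simp only [taylorCoeff_X_mul_succ]
      convert! ((hP m).const_mul h).fun_add (hline.fun_mul (hP (m + 1))) using 1
      simp only [mul_smul_comm]
      module

section DiagonalTaylorCoefficients

open Polynomial

variable {ι R S : Type*} [Fintype ι] [DecidableEq ι] [CommRing R] [CommRing S] [Algebra R S]

lemma taylorCoeff_zero_diagonal (P : R[X]) (x : ι → R) (G : Matrix ι ι S) :
    taylorCoeff P (diagonal fun i => algebraMap R S (x i)) G 0 =
      diagonal fun i => algebraMap R S (P.eval (x i)) := by
  induction P using induction_C_add_X_mul with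
  | hC c =>
    rw [taylorCoeff_C_zero, Matrix.algebraMap_eq_diagonal]
    simp only [eval_C]
    rfl
  | hadd P Q hP hQ =>
    simp only [taylorCoeff_add, hP, hQ, diagonal_add, eval_add, map_add]
  | hX_mul P hP =>
    simp only [taylorCoeff_X_mul_zero, hP, diagonal_mul_diagonal, eval_mul, eval_X, map_mul]

lemma taylorCoeff_one_diagonal_apply (P : R[X]) (x : ι → R) (G : Matrix ι ι S) (i k : ι) :
    taylorCoeff P (diagonal fun i => algebraMap R S (x i)) G 1 i k =
      G i k * algebraMap R S (divDiff P {x k} (x i)) := by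
  induction P using induction_C_add_X_mul with
  | hC c =>
    rw [taylorCoeff_C_succ, ← Multiset.cons_zero, divDiff_C_cons, map_zero, mul_zero]
    rfl
  | hadd P Q hP hQ =>
    rw [taylorCoeff_add, Matrix.add_apply, hP, hQ, divDiff_add, map_add, mul_add]
  | hX_mul P hP =>
    rw [taylorCoeff_X_mul_succ, taylorCoeff_zero_diagonal, Matrix.add_apply, mul_diagonal,
      diagonal_mul, hP, ← Multiset.cons_zero, divDiff_X_mul_cons, divDiff_zero, map_add, map_mul]
    ring

lemma taylorCoeff_two_diagonal_apply (P : R[X]) (x : ι → R) (G : Matrix ι ι S) (i k : ι) :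
    taylorCoeff P (diagonal fun i => algebraMap R S (x i)) G 2 i k =
      ∑ j, G i j * algebraMap R S (divDiff P {x i, x k} (x j)) * G j k := by
  have hcomm (Q : R[X]) (j : ι) : divDiff Q {x i, x k} (x j) = divDiff Q {x j, x k} (x i) :=
    divDiff_cons_comm Q (x i) (x j) {x k}
  simp only [hcomm]
  induction P using induction_C_add_X_mul with
  | hC c =>
    simp only [taylorCoeff_C_succ, Multiset.insert_eq_cons, divDiff_C_cons, map_zero, mul_zero,
      zero_mul, Finset.sum_const_zero, Matrix.zero_apply]
  | hadd P Q hP hQ =>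
    simp only [taylorCoeff_add, Matrix.add_apply, hP, hQ, divDiff_add, map_add, mul_add, add_mul,
      Finset.sum_add_distrib]
  | hX_mul P hP =>
    rw [taylorCoeff_X_mul_succ, Matrix.add_apply, diagonal_mul, mul_apply, hP, Finset.mul_sum,
      ← Finset.sum_add_distrib]
    refine Finset.sum_congr rfl fun j _ => ?_
    rw [taylorCoeff_one_diagonal_apply, Multiset.insert_eq_cons, divDiff_X_mul_cons, map_add,
      map_mul]
    ring

end DiagonalTaylorCoefficients

section SecondTaylorCoefficient

open Polynomial
open scoped MatrixOrder

variable {ι 𝕜 : Type*} [RCLike 𝕜]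

lemma posSemidef_map_algebraMap [Finite ι] {K : Matrix ι ι ℝ} (hK : K.PosSemidef) :
    (K.map (algebraMap ℝ 𝕜)).PosSemidef := by
  have := Fintype.ofFinite ι
  classical
  obtain ⟨B, rfl⟩ := CStarAlgebra.nonneg_iff_eq_star_mul_self.1 (nonneg_iff_posSemidef.2 hK)
  have hstar : (star B).map (algebraMap ℝ 𝕜) = (B.map (algebraMap ℝ 𝕜))ᴴ := by
    ext i k
    simp [star_apply, conjTranspose_apply]
  rw [Matrix.map_mul, hstar]
  exact posSemidef_conjTranspose_mul_self _

variable [Fintype ι] [DecidableEq ι]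

lemma posSemidef_taylorCoeff_two_diagonal {S : Set ℝ} (hS : Convex ℝ S) {P : ℝ[X]}
    (hP : ∀ t ∈ S, (hankel (Fintype.card ι) (taylor t P).coeff).PosSemidef) {x : ι → ℝ}
    (hx : ∀ i, x i ∈ S) {G : Matrix ι ι 𝕜} (hG : G.IsHermitian) :
    (taylorCoeff P (diagonal fun i => algebraMap ℝ 𝕜 (x i)) G 2).PosSemidef := by
  have hsum : taylorCoeff P (diagonal fun i => algebraMap ℝ 𝕜 (x i)) G 2 =
      ∑ j, (diagonal (G j))ᴴ * (krausMatrix P x (x j)).map (algebraMap ℝ 𝕜) * diagonal (G j) := by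
    ext i k
    rw [taylorCoeff_two_diagonal_apply, Matrix.sum_apply]
    refine Finset.sum_congr rfl fun j _ => ?_
    rw [mul_diagonal, diagonal_conjTranspose, diagonal_mul, Pi.star_apply, hG.apply]
    rfl
  rw [hsum]
  exact posSemidef_sum _ fun j _ =>
    (posSemidef_map_algebraMap
      (posSemidef_krausMatrix hS hP hx (hx j))).conjTranspose_mul_mul_same _

lemma posSemidef_taylorCoeff_two {S : Set ℝ} (hS : Convex ℝ S) {P : ℝ[X]}
    (hP : ∀ t ∈ S, (hankel (Fintype.card ι) (taylor t P).coeff).PosSemidef) {A H : Matrix ι ι 𝕜}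
    (hA : A.IsHermitian) (hAS : spectrum ℝ A ⊆ S) (hH : H.IsHermitian) :
    (taylorCoeff P A H 2).PosSemidef := by
  set φ := Unitary.conjStarAlgAut ℝ (Matrix ι ι 𝕜) hA.eigenvectorUnitary
  set D : Matrix ι ι 𝕜 := diagonal fun i => algebraMap ℝ 𝕜 (hA.eigenvalues i)
  have hx (i : ι) : hA.eigenvalues i ∈ S :=
    hAS (hA.spectrum_real_eq_range_eigenvalues ▸ mem_range_self i)
  have hG : (φ.symm H).IsHermitian := hH.isSelfAdjoint.map φ.symm
  have hconj : taylorCoeff P A H 2 = φ (taylorCoeff P D (φ.symm H) 2) :=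
    calc taylorCoeff P A H 2
        = taylorCoeff P (φ D) (φ (φ.symm H)) 2 := by
          rw [φ.apply_symm_apply]
          exact congrArg (taylorCoeff P · H 2) hA.spectral_theorem
      _ = φ (taylorCoeff P D (φ.symm H) 2) :=
          (map_taylorCoeff (φ.toAlgEquiv : Matrix ι ι 𝕜 →ₐ[ℝ] Matrix ι ι 𝕜) P D (φ.symm H) 2).symm
  rw [hconj, Unitary.conjStarAlgAut_apply]
  exact (posSemidef_taylorCoeff_two_diagonal hS hP hx hG).mul_mul_conjTranspose_same _

end SecondTaylorCoefficient

section MatrixConvexity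

open Polynomial
open scoped MatrixOrder Matrix.Norms.L2Operator

variable {ι : Type*} [Fintype ι] [DecidableEq ι]

/-- The Hermitian matrices with spectrum in `S`, to which functions on `S` can be applied. -/
def hermitianSpectrumIn (ι : Type*) [Fintype ι] [DecidableEq ι] (S : Set ℝ) :
    Set (Matrix ι ι ℂ) :=
  {A | A.IsHermitian ∧ spectrum ℝ A ⊆ S}

/-- Matrix convexity on `S`, of order the cardinality of `ι`, for the Loewner order. -/
def MatrixConvexOn (ι : Type*) [Fintype ι] [DecidableEq ι] (S : Set ℝ) (f : ℝ → ℝ) : Prop :=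
  ConvexOn ℝ (hermitianSpectrumIn ι S) (cfc f)

lemma convex_hermitianSpectrumIn_Icc (α β : ℝ) :
    Convex ℝ (hermitianSpectrumIn ι (Icc α β)) := by
  have hset : hermitianSpectrumIn ι (Icc α β) = {A | A.IsHermitian} ∩
      Icc (algebraMap ℝ (Matrix ι ι ℂ) α) (algebraMap ℝ (Matrix ι ι ℂ) β) := by
    ext A
    refine and_congr_right fun hA => ?_
    rw [mem_Icc, algebraMap_le_iff_le_spectrum hA, le_algebraMap_iff_spectrum_le hA]
    exact forall₂_and
  rw [hset]
  exact (selfAdjoint.submodule ℝ (Matrix ι ι ℂ)).convex.inter (convex_Icc _ _)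

/-- The real part of the quadratic form `v* M v`, as a functional of the matrix `M`. -/
def reQuadForm {ι : Type*} [Fintype ι] (v : ι → ℂ) : Matrix ι ι ℂ →ₗ[ℝ] ℝ where
  toFun M := (star v ⬝ᵥ M *ᵥ v).re
  map_add' M N := by rw [add_mulVec, dotProduct_add, Complex.add_re]
  map_smul' c M := by rw [smul_mulVec, dotProduct_smul, Complex.smul_re, RingHom.id_apply]

lemma posSemidef_iff_forall_reQuadForm_nonneg {ι : Type*} [Fintype ι] {M : Matrix ι ι ℂ}
    (hM : M.IsHermitian) : M.PosSemidef ↔ ∀ v, 0 ≤ reQuadForm v M := by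
  refine ⟨fun h v => h.re_dotProduct_nonneg v, fun h => ?_⟩
  refine .of_dotProduct_mulVec_nonneg hM fun v => ?_
  exact Complex.nonneg_iff.2 ⟨h v, (hM.im_star_dotProduct_mulVec_self v).symm⟩

lemma convexOn_of_forall_reQuadForm {ι E : Type*} [Fintype ι] [AddCommGroup E] [Module ℝ E]
    {D : Set E} (hD : Convex ℝ D) {F : E → Matrix ι ι ℂ} (hherm : ∀ s ∈ D, (F s).IsHermitian)
    (hF : ∀ v, ConvexOn ℝ D fun s => reQuadForm v (F s)) : ConvexOn ℝ D F := by
  refine ⟨hD, fun s hs t ht μ ν hμ hν hμν => le_iff.2 ?_⟩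
  have hsub : (μ • F s + ν • F t - F (μ • s + ν • t)).IsHermitian :=
    .sub (.add ((IsSelfAdjoint.all μ).smul (hherm s hs)) ((IsSelfAdjoint.all ν).smul (hherm t ht)))
      (hherm _ (hD hs ht hμ hν hμν))
  refine (posSemidef_iff_forall_reQuadForm_nonneg hsub).2 fun v => ?_
  rw [map_sub, map_add, map_smul, map_smul, sub_nonneg]
  exact (hF v).2 hs ht hμ hν hμν

lemma hasDerivAt_reQuadForm {ι : Type*} [Fintype ι] {F : ℝ → Matrix ι ι ℂ} {F' : Matrix ι ι ℂ}
    {s : ℝ} (hF : HasDerivAt F F' s) (v : ι → ℂ) :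
    HasDerivAt (fun s => reQuadForm v (F s)) (reQuadForm v F') s := by
  classical
  exact (reQuadForm v).toContinuousLinearMap.hasFDerivAt.comp_hasDerivAt s hF

lemma convexOn_of_hasDerivAt2_posSemidef {ι : Type*} [Finite ι] {D : Set ℝ} (hD : Convex ℝ D)
    {F F' F'' : ℝ → Matrix ι ι ℂ} (hherm : ∀ s ∈ D, (F s).IsHermitian)
    (hF : ∀ s, HasDerivAt F (F' s) s) (hF' : ∀ s, HasDerivAt F' (F'' s) s)
    (hF'' : ∀ s ∈ D, (F'' s).PosSemidef) : ConvexOn ℝ D F := by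
  have := Fintype.ofFinite ι
  refine convexOn_of_forall_reQuadForm hD hherm fun v => ?_
  exact convexOn_of_hasDerivWithinAt2_nonneg hD
    (fun s _ => (hasDerivAt_reQuadForm (hF s) v).continuousAt.continuousWithinAt)
    (fun s _ => (hasDerivAt_reQuadForm (hF s) v).hasDerivWithinAt)
    (fun s _ => (hasDerivAt_reQuadForm (hF' s) v).hasDerivWithinAt)
    fun s hs => (hF'' s (interior_subset hs)).re_dotProduct_nonneg v

lemma isHermitian_aeval {A : Matrix ι ι ℂ} (hA : A.IsHermitian) (P : ℝ[X]) :
    (aeval A P).IsHermitian := by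
  rw [← cfc_polynomial P A hA]
  exact cfc_predicate _ A

lemma convexOn_aeval {S : Set ℝ} {P : ℝ[X]} (hS : Convex ℝ S)
    (hconv : Convex ℝ (hermitianSpectrumIn ι S))
    (hP : ∀ t ∈ S, (hankel (Fintype.card ι) (taylor t P).coeff).PosSemidef) :
    ConvexOn ℝ (hermitianSpectrumIn ι S) fun A => aeval A P := by
  refine ⟨hconv, fun A hA B hB μ ν hμ hν hμν => ?_⟩
  have hline {s : ℝ} (hs : s ∈ Icc (0 : ℝ) 1) : A + s • (B - A) ∈ hermitianSpectrumIn ι S :=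
    hconv.add_smul_sub_mem hA hB hs
  have hsegment : ConvexOn ℝ (Icc (0 : ℝ) 1) fun s => aeval (A + s • (B - A)) P := by
    simp only [← taylorCoeff_zero P _ (B - A)]
    refine convexOn_of_hasDerivAt2_posSemidef (convex_Icc 0 1) (fun s hs => ?_)
      (fun s => hasDerivAt_taylorCoeff P A (B - A) 0 s)
      (fun s => (hasDerivAt_taylorCoeff P A (B - A) 1 s).const_smul (0 + 1)) fun s hs => ?_
    · rw [taylorCoeff_zero]
      exact isHermitian_aeval (hline hs).1 P
    · have hpos := posSemidef_taylorCoeff_two hS hP (hline hs).1 (hline hs).2 (hB.1.sub hA.1)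
      exact nonneg_iff_posSemidef.1
        (nsmul_nonneg (nsmul_nonneg (nonneg_iff_posSemidef.2 hpos) _) _)
  have hle := hsegment.2 (left_mem_Icc.2 zero_le_one) (right_mem_Icc.2 zero_le_one) hμ hν hμν
  obtain rfl : μ = 1 - ν := by linarith
  have hpoint : (1 - ν) • A + ν • B = A + ν • (B - A) := by module
  rw [hpoint]
  simpa only [smul_zero, smul_eq_mul, mul_one, zero_add, zero_smul, add_zero, one_smul,
    mul_zero, add_sub_cancel] using hle

lemma matrixConvexOn_eval {α β : ℝ} {P : ℝ[X]}
    (hP : ∀ t ∈ Icc α β, (hankel (Fintype.card ι) (taylor t P).coeff).PosSemidef) :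
    MatrixConvexOn ι (Icc α β) fun t => P.eval t :=
  (convexOn_aeval (convex_Icc α β) (convex_hermitianSpectrumIn_Icc α β) hP).congr
    fun A hA => (cfc_polynomial P A hA.1).symm

end MatrixConvexity

section Limits

open Filter
open scoped MatrixOrder Matrix.Norms.L2Operator

lemma MatrixConvexOn.of_tendstoUniformlyOn {ι κ : Type*} [Fintype ι] [DecidableEq ι] {l : Filter κ}
    [l.NeBot] {S : Set ℝ} {F : κ → ℝ → ℝ} {f : ℝ → ℝ} (hF : ∀ᶠ k in l, MatrixConvexOn ι S (F k))
    (hcont : ∀ᶠ k in l, ContinuousOn (F k) S) (hlim : TendstoUniformlyOn F f l S) :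
    MatrixConvexOn ι S f := by
  have hconv : Convex ℝ (hermitianSpectrumIn ι S) := hF.exists.choose_spec.1
  have hcfc {A : Matrix ι ι ℂ} (hA : A ∈ hermitianSpectrumIn ι S) :
      Tendsto (fun k => cfc (F k) A) l (nhds (cfc f A)) :=
    tendsto_cfc_fun (hlim.mono hA.2) (hcont.mono fun _ hk => hk.mono hA.2)
  refine ⟨hconv, fun A hA B hB μ ν hμ hν hμν => ?_⟩
  exact le_of_tendsto_of_tendsto (hcfc (hconv hA hB hμ hν hμν))
    (((hcfc hA).const_smul μ).add ((hcfc hB).const_smul ν))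
    (hF.mono fun _ hk => hk.2 hA hB hμ hν hμν)

end Limits

section PolynomialApproximation

open Polynomial

/-- `F 0` is of class `C^N` on `S` with successive derivatives `F 1, …, F N`: the one-variable
counterpart of `HasFTaylorSeriesUpToOn`. -/
structure HasDerivSeqUpToOn (N : ℕ) (F : ℕ → ℝ → ℝ) (S : Set ℝ) : Prop where
  hasDerivWithinAt : ∀ m < N, ∀ t ∈ S, HasDerivWithinAt (F m) (F (m + 1) t) S t
  continuousOn : ∀ m ≤ N, ContinuousOn (F m) S

namespace HasDerivSeqUpToOn

variable {N : ℕ} {F G : ℕ → ℝ → ℝ} {S T : Set ℝ}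

lemma tail (hF : HasDerivSeqUpToOn (N + 1) F S) : HasDerivSeqUpToOn N (fun m => F (m + 1)) S where
  hasDerivWithinAt m hm := hF.hasDerivWithinAt (m + 1) (Nat.succ_lt_succ hm)
  continuousOn m hm := hF.continuousOn (m + 1) (Nat.succ_le_succ hm)

lemma mono (hF : HasDerivSeqUpToOn N F S) (hTS : T ⊆ S) : HasDerivSeqUpToOn N F T where
  hasDerivWithinAt m hm t ht := (hF.hasDerivWithinAt m hm t (hTS ht)).mono hTS
  continuousOn m hm := (hF.continuousOn m hm).mono hTS

lemma add_const_mul (hF : HasDerivSeqUpToOn N F S) (hG : HasDerivSeqUpToOn N G S) (c : ℝ) :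
    HasDerivSeqUpToOn N (fun m t => F m t + c * G m t) S where
  hasDerivWithinAt m hm t ht :=
    (hF.hasDerivWithinAt m hm t ht).fun_add ((hG.hasDerivWithinAt m hm t ht).const_mul c)
  continuousOn m hm := (hF.continuousOn m hm).add (continuousOn_const.mul (hG.continuousOn m hm))

lemma sum {κ : Type*} [Fintype κ] {F : κ → ℕ → ℝ → ℝ} (hF : ∀ k, HasDerivSeqUpToOn N (F k) S) :
    HasDerivSeqUpToOn N (fun m t => ∑ k, F k m t) S where
  hasDerivWithinAt m hm t ht :=
    .fun_sum fun k _ => (hF k).hasDerivWithinAt m hm t ht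
  continuousOn m hm := continuousOn_finsetSum _ fun k _ => (hF k).continuousOn m hm

end HasDerivSeqUpToOn

lemma hasDerivSeqUpToOn_iteratedDerivWithin {N : ℕ} {f : ℝ → ℝ} {S : Set ℝ}
    (hf : ContDiffOn ℝ N f S) (hS : UniqueDiffOn ℝ S) :
    HasDerivSeqUpToOn N (fun m => iteratedDerivWithin m f S) S where
  hasDerivWithinAt m hm t ht := by
    rw [iteratedDerivWithin_succ]
    exact (hf.differentiableOn_iteratedDerivWithin (Nat.cast_lt.2 hm) hS t ht).hasDerivWithinAt
  continuousOn m hm := hf.continuousOn_iteratedDerivWithin (Nat.cast_le.2 hm) hS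

lemma surjective_derivative (K : Type*) [Field K] [CharZero K] :
    Function.Surjective (derivative : K[X] → K[X]) := by
  intro P
  induction P using Polynomial.induction_on' with
  | add P Q hP hQ =>
    obtain ⟨P', rfl⟩ := hP
    obtain ⟨Q', rfl⟩ := hQ
    exact ⟨P' + Q', derivative_add⟩
  | monomial k c =>
    refine ⟨monomial (k + 1) (c / (k + 1)), ?_⟩
    rw [derivative_monomial, Nat.cast_succ, div_mul_cancel₀ c k.cast_add_one_ne_zero,
      Nat.add_sub_cancel]

lemma exists_derivative_eq_and_near {α β ε : ℝ} (hαβ : α ≤ β) {f f' : ℝ → ℝ}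
    (hf : ∀ t ∈ Icc α β, HasDerivWithinAt f (f' t) (Icc α β) t) {Q : ℝ[X]}
    (hQ : ∀ t ∈ Icc α β, |Q.eval t - f' t| ≤ ε) :
    ∃ P : ℝ[X], derivative P = Q ∧ ∀ t ∈ Icc α β, |P.eval t - f t| ≤ ε * (β - α) := by
  obtain ⟨R, rfl⟩ := surjective_derivative ℝ Q
  have hderiv : derivative (R + C (f α - R.eval α)) = derivative R := by
    rw [derivative_add, derivative_C, add_zero]
  refine ⟨R + C (f α - R.eval α), hderiv, fun t ht => ?_⟩
  have hε : 0 ≤ ε := (abs_nonneg _).trans (hQ t ht)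
  have hbound := (convex_Icc α β).norm_image_sub_le_of_norm_hasDerivWithin_le
    (fun s hs => ((R + C (f α - R.eval α)).hasDerivAt s).hasDerivWithinAt.sub (hf s hs))
    (fun s hs => by rw [hderiv]; exact hQ s hs) (left_mem_Icc.2 hαβ) ht
  calc |(R + C (f α - R.eval α)).eval t - f t|
      ≤ ε * |t - α| := by simpa using hbound
    _ ≤ ε * (β - α) := by
      rw [abs_of_nonneg (sub_nonneg.2 ht.1)]
      exact mul_le_mul_of_nonneg_left (sub_le_sub_right ht.2 α) hε

lemma HasDerivSeqUpToOn.exists_polynomial_near {α β : ℝ} (hαβ : α ≤ β) {N : ℕ} {F : ℕ → ℝ → ℝ}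
    (hF : HasDerivSeqUpToOn N F (Icc α β)) {ε : ℝ} (hε : 0 < ε) :
    ∃ P : ℝ[X], ∀ m ≤ N, ∀ t ∈ Icc α β, |(derivative^[m] P).eval t - F m t| ≤ ε := by
  induction N generalizing F ε with
  | zero =>
    obtain ⟨P, hP⟩ :=
      exists_polynomial_near_of_continuousOn α β (F 0) (hF.continuousOn 0 le_rfl) ε hε
    refine ⟨P, fun m hm t ht => ?_⟩
    obtain rfl := Nat.le_zero.1 hm
    exact (hP t ht).le
  | succ N ih =>
    have hlength : 0 < 1 + (β - α) := by linarith
    obtain ⟨Q, hQ⟩ := ih hF.tail (div_pos hε hlength)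
    obtain ⟨P, rfl, hP⟩ := exists_derivative_eq_and_near hαβ
      (hF.hasDerivWithinAt 0 N.succ_pos) fun t ht => hQ 0 N.zero_le t ht
    refine ⟨P, fun m hm t ht => ?_⟩
    cases m with
    | zero =>
      refine (hP t ht).trans ?_
      rw [div_mul_eq_mul_div, div_le_iff₀ hlength]
      exact mul_le_mul_of_nonneg_left (by linarith) hε.le
    | succ m =>
      exact (hQ m (Nat.le_of_succ_le_succ hm) t ht).trans (div_le_self hε.le (by linarith))

end PolynomialApproximation

section PosDefHankel

open Polynomial Filter Topology

lemma isOpen_setOf_forall_dotProduct_mulVec_pos {ι : Type*} [Fintype ι] :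
    IsOpen {M : Matrix ι ι ℝ | ∀ v ≠ 0, 0 < v ⬝ᵥ M *ᵥ v} := by
  have hsphere (M : Matrix ι ι ℝ) : (∀ v ≠ 0, 0 < v ⬝ᵥ M *ᵥ v) ↔
      ∀ v ∈ Metric.sphere (0 : ι → ℝ) 1, 0 < v ⬝ᵥ M *ᵥ v := by
    refine ⟨fun h v hv => h v (ne_zero_of_mem_unit_sphere ⟨v, hv⟩), fun h v hv => ?_⟩
    have hunit : ‖v‖⁻¹ • v ∈ Metric.sphere (0 : ι → ℝ) 1 :=
      by
      rw [mem_sphere_zero_iff_norm, norm_smul, norm_inv, norm_norm,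
        inv_mul_cancel₀ (norm_ne_zero_iff.2 hv)]
    have hscaled := h _ hunit
    rw [mulVec_smul, smul_dotProduct, dotProduct_smul, smul_smul, smul_eq_mul] at hscaled
    exact pos_of_mul_pos_right hscaled (mul_self_nonneg _)
  simp only [hsphere]
  refine isOpen_iff_eventually.2 fun M hM =>
    (isCompact_sphere (0 : ι → ℝ) 1).eventually_forall_of_forall_eventually fun v hv => ?_
  have hcont : Continuous fun z : Matrix ι ι ℝ × (ι → ℝ) => z.2 ⬝ᵥ z.1 *ᵥ z.2 := by fun_prop
  exact continuousAt_const.eventually_lt hcont.continuousAt (hM v hv)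

open scoped Matrix.Norms.Elementwise in
lemma exists_forall_near_posDef {X ι : Type*} [TopologicalSpace X] [Finite ι] {s : Set X}
    (hs : IsCompact s) {K : X → Matrix ι ι ℝ} (hcont : ContinuousOn K s)
    (hpos : ∀ x ∈ s, (K x).PosDef) :
    ∃ δ > 0, ∀ x ∈ s, ∀ M : Matrix ι ι ℝ, M.IsHermitian → (∀ i j, |M i j - K x i j| < δ) →
      M.PosDef := by
  have := Fintype.ofFinite ι
  obtain ⟨δ, hδ, hsub⟩ := (hs.image_of_continuousOn hcont).exists_thickening_subset_open
    isOpen_setOf_forall_dotProduct_mulVec_pos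
    (image_subset_iff.2 fun x hx v hv => (hpos x hx).dotProduct_mulVec_pos hv)
  refine ⟨δ, hδ, fun x hx M hM hnear => .of_dotProduct_mulVec_pos hM fun v hv => ?_⟩
  refine hsub (Metric.mem_thickening_iff.2 ⟨K x, mem_image_of_mem K hx, ?_⟩) v hv
  exact (dist_pi_lt_iff hδ).2 fun i => (dist_pi_lt_iff hδ).2 (hnear i)

lemma isHermitian_hankel (n : ℕ) (c : ℕ → ℝ) : (hankel n c).IsHermitian := by
  ext i j
  rw [conjTranspose_apply, star_trivial, hankel, of_apply, of_apply, add_comm (j : ℕ)]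

lemma abs_taylor_coeff_sub_le {P : ℝ[X]} {m : ℕ} {t y ε : ℝ}
    (h : |(derivative^[m] P).eval t - y| ≤ ε) :
    |(taylor t P).coeff m - y / m.factorial| ≤ ε := by
  have hfactorial : (1 : ℝ) ≤ m.factorial := Nat.one_le_cast.2 m.factorial_pos
  have hcoeff : (taylor t P).coeff m = (derivative^[m] P).eval t / m.factorial := by
    rw [taylor_coeff, ← factorial_smul_hasseDeriv, LinearMap.smul_apply, eval_smul, nsmul_eq_mul,
      mul_div_cancel_left₀ _ (by positivity)]
  rw [hcoeff, ← sub_div, abs_div, Nat.abs_cast]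
  exact (div_le_self (abs_nonneg _) hfactorial).trans h

variable {ι : Type*} [Fintype ι] [DecidableEq ι]

lemma matrixConvexOn_of_posDef_hankel {α β : ℝ} (hαβ : α ≤ β) {F : ℕ → ℝ → ℝ}
    (hF : HasDerivSeqUpToOn (2 * Fintype.card ι) F (Icc α β))
    (hpos : ∀ t ∈ Icc α β, (hankel (Fintype.card ι) fun m => F m t / m.factorial).PosDef) :
    MatrixConvexOn ι (Icc α β) (F 0) := by
  have hcont : ContinuousOn (fun t => hankel (Fintype.card ι) fun m => F m t / m.factorial)
      (Icc α β) := continuousOn_pi.2 fun i => continuousOn_pi.2 fun j =>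
    (hF.continuousOn _ (by omega)).div_const _
  obtain ⟨δ, hδ, hnear⟩ := exists_forall_near_posDef isCompact_Icc hcont hpos
  choose! P hP using fun ε (hε : 0 < ε) => hF.exists_polynomial_near hαβ hε
  have hconvex : ∀ᶠ ε in 𝓝[>] 0, MatrixConvexOn ι (Icc α β) fun t => (P ε).eval t := by
    filter_upwards [Ioo_mem_nhdsGT hδ] with ε hε
    refine matrixConvexOn_eval fun t ht => (hnear t ht _ (isHermitian_hankel _ _)
      fun i j => ?_).posSemidef
    exact (abs_taylor_coeff_sub_le (hP ε hε.1 _ (by omega) t ht)).trans_lt hε.2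
  refine .of_tendstoUniformlyOn hconvex (.of_forall fun ε => (P ε).continuousOn) ?_
  refine Metric.tendstoUniformlyOn_iff.2 fun ε hε => ?_
  filter_upwards [Ioo_mem_nhdsGT hε] with η hη t ht
  rw [dist_comm]
  exact (hP η hη.1 0 (Nat.zero_le _) t ht).trans_lt hη.2

end PosDefHankel

section Perturbation

open Filter Topology

lemma posDef_hankel_sum_pow {n : ℕ} {τ : Fin n → ℝ} (hpos : ∀ k, 0 < τ k)
    (hinj : Function.Injective τ) : (hankel n fun m => ∑ k, τ k ^ (m + 1)).PosDef := by
  have hfactor : (hankel n fun m => ∑ k, τ k ^ (m + 1)) =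
      (vandermonde τ)ᴴ * diagonal (fun k => τ k ^ 3) * vandermonde τ := by
    ext i j
    change ∑ k, τ k ^ ((i : ℕ) + j + 2 + 1) = _
    rw [Matrix.mul_apply]
    refine Finset.sum_congr rfl fun k _ => ?_
    rw [mul_diagonal, conjTranspose_apply, star_trivial, vandermonde_apply, vandermonde_apply]
    ring
  rw [hfactor]
  refine (posDef_diagonal_iff.2 fun k => pow_pos (hpos k) 3).conjTranspose_mul_mul_same ?_
  exact mulVec_injective_of_isUnit ((isUnit_iff_isUnit_det _).2
    (det_vandermonde_ne_zero_iff.2 hinj).isUnit)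

lemma hasDerivSeqUpToOn_inv_sub {σ : ℝ} {S : Set ℝ} (hσ : ∀ t ∈ S, t ≠ σ) (N : ℕ) :
    HasDerivSeqUpToOn N (fun m t => m.factorial * (σ - t)⁻¹ ^ (m + 1)) S := by
  have hderiv (m : ℕ) (t : ℝ) (ht : t ∈ S) :
      HasDerivAt (fun t => m.factorial * (σ - t)⁻¹ ^ (m + 1))
        ((m + 1).factorial * (σ - t)⁻¹ ^ (m + 2)) t := by
    have hne : σ - t ≠ 0 := sub_ne_zero.2 (hσ t ht).symm
    refine (((((hasDerivAt_id t).const_sub σ).fun_inv hne).fun_pow (m + 1)).const_mul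
      (m.factorial : ℝ)).congr_deriv ?_
    rw [Nat.factorial_succ]
    push_cast
    simp only [id, inv_pow]
    field_simp
    ring
  exact ⟨fun m _ t ht => (hderiv m t ht).hasDerivWithinAt,
    fun m _ t ht => (hderiv m t ht).continuousAt.continuousWithinAt⟩

/-- The `m`-th derivative of `t ↦ ∑ k, (β + 1 + k - t)⁻¹`, a function which is smooth on `(-∞, β]`
and has positive definite Hankel matrices of size `n` there. -/
noncomputable def simplePoleSum (n : ℕ) (β : ℝ) (m : ℕ) (t : ℝ) : ℝ :=
  ∑ k : Fin n, m.factorial * (β + 1 + k - t)⁻¹ ^ (m + 1)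

lemma hasDerivSeqUpToOn_simplePoleSum (n : ℕ) (β : ℝ) (N : ℕ) :
    HasDerivSeqUpToOn N (simplePoleSum n β) (Iic β) := by
  refine .sum fun k => hasDerivSeqUpToOn_inv_sub (fun t ht => ?_) N
  linarith [mem_Iic.1 ht, Nat.cast_nonneg (α := ℝ) (k : ℕ)]

lemma posDef_hankel_simplePoleSum (n : ℕ) {β t : ℝ} (ht : t ≤ β) :
    (hankel n fun m => simplePoleSum n β m t / m.factorial).PosDef := by
  have hcoeff (m : ℕ) : simplePoleSum n β m t / m.factorial =
      ∑ k : Fin n, (β + 1 + k - t)⁻¹ ^ (m + 1) := by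
    rw [simplePoleSum, ← Finset.mul_sum, mul_div_cancel_left₀ _ (by positivity)]
  simp only [hcoeff]
  refine posDef_hankel_sum_pow (fun k => inv_pos.2 ?_) fun j k hjk => ?_
  · linarith [Nat.cast_nonneg (α := ℝ) (k : ℕ)]
  · have hcast : (j : ℝ) = k := by linarith [inv_inj.1 hjk]
    exact Fin.ext (Nat.cast_injective hcast)

end Perturbation

section PosSemidefHankel

open Filter Topology
open scoped MatrixOrder

variable {ι : Type*} [Fintype ι] [DecidableEq ι]

lemma tendstoUniformlyOn_add_const_mul {X : Type*} [TopologicalSpace X] {s : Set X}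
    (hs : IsCompact s) (f : X → ℝ) {g : X → ℝ} (hg : ContinuousOn g s) :
    TendstoUniformlyOn (fun ε x => f x + ε * g x) f (𝓝[>] (0 : ℝ)) s := by
  obtain ⟨C, hC⟩ := hs.exists_bound_of_continuousOn hg
  refine Metric.tendstoUniformlyOn_iff.2 fun η hη => ?_
  have hlim : Tendsto (fun ε : ℝ => ε * C) (𝓝[>] 0) (𝓝 0) := by
    simpa only [zero_mul, id] using
      (tendsto_id.mono_left nhdsWithin_le_nhds : Tendsto id (𝓝[>] (0 : ℝ)) (𝓝 0)).mul_const C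
  filter_upwards [hlim.eventually_lt_const hη, self_mem_nhdsWithin] with ε hεC hε x hx
  have hε0 : 0 ≤ ε := le_of_lt hε
  rw [dist_comm, Real.dist_eq, add_sub_cancel_left, abs_mul, abs_of_nonneg hε0]
  exact (mul_le_mul_of_nonneg_left (hC x hx) hε0).trans_lt hεC

lemma matrixConvexOn_Icc_of_posSemidef_hankel {α β : ℝ} (hαβ : α ≤ β) {F : ℕ → ℝ → ℝ}
    (hF : HasDerivSeqUpToOn (2 * Fintype.card ι) F (Icc α β))
    (hpos : ∀ t ∈ Icc α β, (hankel (Fintype.card ι) fun m => F m t / m.factorial).PosSemidef) :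
    MatrixConvexOn ι (Icc α β) (F 0) := by
  set G := simplePoleSum (Fintype.card ι) β
  have hG : HasDerivSeqUpToOn (2 * Fintype.card ι) G (Icc α β) :=
    (hasDerivSeqUpToOn_simplePoleSum _ β _).mono Icc_subset_Iic_self
  have hsum (ε t : ℝ) : (hankel (Fintype.card ι) fun m => (F m t + ε * G m t) / m.factorial) =
      (hankel (Fintype.card ι) fun m => F m t / m.factorial) +
        ε • hankel (Fintype.card ι) fun m => G m t / m.factorial := by
    ext i j
    simp only [hankel, of_apply, Matrix.add_apply, Matrix.smul_apply, smul_eq_mul, add_div,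
      mul_div_assoc]
  have hperturbed (ε : ℝ) (hε : 0 < ε) :
      MatrixConvexOn ι (Icc α β) fun t => F 0 t + ε * G 0 t := by
    refine matrixConvexOn_of_posDef_hankel (F := fun m t => F m t + ε * G m t) hαβ
      (hF.add_const_mul hG ε) fun t ht => ?_
    rw [hsum]
    exact .posSemidef_add (hpos t ht) ((posDef_hankel_simplePoleSum _ ht.2).smul hε)
  have hF0 : ContinuousOn (F 0) (Icc α β) := hF.continuousOn 0 (Nat.zero_le _)
  have hG0 : ContinuousOn (G 0) (Icc α β) := hG.continuousOn 0 (Nat.zero_le _)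
  exact .of_tendstoUniformlyOn (eventually_nhdsWithin_of_forall (s := Ioi 0) hperturbed)
    (.of_forall fun ε => hF0.add (continuousOn_const.mul hG0))
    (tendstoUniformlyOn_add_const_mul isCompact_Icc (F 0) hG0)

lemma exists_Icc_subset_mem_hermitianSpectrumIn [Nonempty ι] {S : Set ℝ} (hS : S.OrdConnected)
    {A B : Matrix ι ι ℂ} (hA : A ∈ hermitianSpectrumIn ι S) (hB : B ∈ hermitianSpectrumIn ι S) :
    ∃ α β, α ≤ β ∧ Icc α β ⊆ S ∧
      A ∈ hermitianSpectrumIn ι (Icc α β) ∧ B ∈ hermitianSpectrumIn ι (Icc α β) := by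
  set T := spectrum ℝ A ∪ spectrum ℝ B
  have hfinite : T.Finite := finite_real_spectrum.union finite_real_spectrum
  have hnonempty : T.Nonempty :=
    .inl (hA.1.spectrum_real_eq_range_eigenvalues ▸ range_nonempty _)
  have hTS : T ⊆ S := union_subset hA.2 hB.2
  have hT : T ⊆ Icc (sInf T) (sSup T) := subset_Icc_csInf_csSup hfinite.bddBelow hfinite.bddAbove
  exact ⟨sInf T, sSup T, csInf_le_csSup hnonempty hfinite.bddBelow hfinite.bddAbove,
    hS.out (hTS (hnonempty.csInf_mem hfinite)) (hTS (hnonempty.csSup_mem hfinite)),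
    ⟨hA.1, subset_union_left.trans hT⟩, ⟨hB.1, subset_union_right.trans hT⟩⟩

lemma matrixConvexOn_of_forall_Icc {S : Set ℝ} (hS : S.OrdConnected) {f : ℝ → ℝ}
    (hf : ∀ α β, α ≤ β → Icc α β ⊆ S → MatrixConvexOn ι (Icc α β) f) : MatrixConvexOn ι S f := by
  obtain hι | hι := isEmpty_or_nonempty ι
  · have heq (A B : Matrix ι ι ℂ) : A = B := Subsingleton.elim A B
    refine ⟨fun A hA B _ μ ν _ _ _ => ?_, fun _ _ _ _ _ _ _ _ _ => (heq _ _).le⟩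
    rwa [heq (μ • A + ν • B) A]
  refine ⟨fun A hA B hB μ ν hμ hν hμν => ?_, fun A hA B hB μ ν hμ hν hμν => ?_⟩
  all_goals
    obtain ⟨α, β, hαβ, hsub, hA', hB'⟩ := exists_Icc_subset_mem_hermitianSpectrumIn hS hA hB
    obtain ⟨hconv, hle⟩ := hf α β hαβ hsub
  · have hmem := hconv hA' hB' hμ hν hμν
    exact ⟨hmem.1, hmem.2.trans hsub⟩
  · exact hle hA' hB' hμ hν hμν

lemma matrixConvexOn_of_posSemidef_hankel {S : Set ℝ} (hS : S.OrdConnected) {F : ℕ → ℝ → ℝ}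
    (hF : HasDerivSeqUpToOn (2 * Fintype.card ι) F S)
    (hpos : ∀ t ∈ S, (hankel (Fintype.card ι) fun m => F m t / m.factorial).PosSemidef) :
    MatrixConvexOn ι S (F 0) :=
  matrixConvexOn_of_forall_Icc hS fun _ _ hαβ hsub =>
    matrixConvexOn_Icc_of_posSemidef_hankel hαβ (hF.mono hsub) fun t ht => hpos t (hsub ht)

lemma MatrixConvexOn.posSemidef_cfc_sub {S : Set ℝ} {f : ℝ → ℝ} (hf : MatrixConvexOn ι S f)
    {A B : Matrix ι ι ℂ} (hA : A.IsHermitian) (hB : B.IsHermitian) {μ : ℝ} (hμ : μ ∈ Icc (0 : ℝ) 1)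
    (hC : (μ • A + (1 - μ) • B).IsHermitian) (hAS : ∀ i, hA.eigenvalues i ∈ S)
    (hBS : ∀ i, hB.eigenvalues i ∈ S) :
    (μ • hA.cfc f + (1 - μ) • hB.cfc f - hC.cfc f).PosSemidef := by
  have hmem {M : Matrix ι ι ℂ} (hM : M.IsHermitian) (hMS : ∀ i, hM.eigenvalues i ∈ S) :
      M ∈ hermitianSpectrumIn ι S :=
    ⟨hM, hM.spectrum_real_eq_range_eigenvalues ▸ range_subset_iff.2 hMS⟩
  rw [← hA.cfc_eq, ← hB.cfc_eq, ← hC.cfc_eq]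
  exact le_iff.1 (hf.2 (hmem hA hAS) (hmem hB hBS) hμ.1 (sub_nonneg.2 hμ.2) (add_sub_cancel μ 1))

theorem stmt17_general {S : Set ℝ} (hS : S.OrdConnected) (hS' : UniqueDiffOn ℝ S) {f : ℝ → ℝ}
    (hf : ContDiffOn ℝ (2 * Fintype.card ι : ℕ) f S)
    (hpos : ∀ t ∈ S,
      (hankel (Fintype.card ι) fun m => iteratedDerivWithin m f S t / m.factorial).PosSemidef) :
    MatrixConvexOn ι S f := by
  have hconvex := matrixConvexOn_of_posSemidef_hankel (F := fun m => iteratedDerivWithin m f S) hS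
    (hasDerivSeqUpToOn_iteratedDerivWithin hf hS') hpos
  rwa [iteratedDerivWithin_zero] at hconvex

end PosSemidefHankel

/-- If the Hankel matrix `K_n(t,f)` is positive semi-definite for every `t ∈ (a,b)`, then `f`
is matrix convex of order `n` on `(a,b)`:
`f(μA + (1-μ)B) ≤ μ f(A) + (1-μ) f(B)` for Hermitian `A, B` with spectra in `(a,b)` and
`μ ∈ [0,1]` (matrix functions via the functional calculus for Hermitian matrices). -/
theorem stmt17 (n : ℕ) (hn : 2 ≤ n) (a b : ℝ) (f : ℝ → ℝ)
    (hf : ContDiffOn ℝ (2 * n : ℕ) f (Ioo a b))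
    (hK : ∀ t ∈ Ioo a b,
      (Matrix.of fun i j : Fin n =>
        iteratedDerivWithin (i.val + j.val + 2) f (Ioo a b) t /
          (Nat.factorial (i.val + j.val + 2) : ℝ)).PosSemidef) :
    ∀ (A B : Matrix (Fin n) (Fin n) ℂ) (hA : A.IsHermitian) (hB : B.IsHermitian)
      (μ : ℝ) (hμ : μ ∈ Icc (0 : ℝ) 1)
      (hC : (μ • A + (1 - μ) • B).IsHermitian),
      (∀ i, hA.eigenvalues i ∈ Ioo a b) → (∀ i, hB.eigenvalues i ∈ Ioo a b) →
      (μ • hA.cfc f + (1 - μ) • hB.cfc f - hC.cfc f).PosSemidef := by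
  have hconvex : MatrixConvexOn (Fin n) (Ioo a b) f :=
    stmt17_general ordConnected_Ioo isOpen_Ioo.uniqueDiffOn (by rwa [Fintype.card_fin])
      (by rwa [Fintype.card_fin])
  exact fun A B hA hB μ hμ hC => hconvex.posSemidef_cfc_sub hA hB hμ hC
end
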